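/- arXiv:2301.06317 — 4 statements merged into one kernel-verified Lean document; each statement's English description precedes it below -/
import Mathlib

section
/- Let m ≥ 1 be an integer. Then ∑_{k=0}^∞ (H_k² − H_k^{(2)})/(k+1)^(m+1) = ((m+1)(m+2)/3)·ζ(m+3) − ∑_{j=1}^{m−1} (j+1)·ζ(j+2)·ζ(m+1−j) + (1/m)·∑_{ℓ=1}^{m−1} (m−ℓ)·ζ(m−ℓ+1)·∑_{j=1}^{ℓ−1} ζ(j+1)·ζ(ℓ−j+1). -/
/-!
The sum on the left is twice `∑ e₂(k) / (k+1)^(m+1)`, where `e₂(k) = (H_k² - H_k^{(2)}) / 2` is the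
second elementary symmetric function of `1, 1/2, …, 1/k`. The proof evaluates the generating
function of these sums in `m`, which for `|x| < 1`, `t = -x`, is
`S_{e₂}(t) = ∑_k e₂(k) (1/(k+1+t) - 1/(k+1))`. With `P_p(t) = ∑_k (1/(k+1+t)^p - 1/(k+1)^p)`,
the claim is (`shiftSum_E2`)
`S_{e₂} = P₃/3 - P₁ P₂/2 + P₁³/6`   for `t > -1`.
This is the `y³`-coefficient of the product formula for `1 - Γ(1-x)Γ(1-y)/Γ(1-x-y)`.

To prove it, both sides are shown to satisfy the same difference equation in `t`. Summation by
parts gives `S_b(t) = S_b(t+1) - S_a(t+1)/(1+t)` whenever `b(k+1) - b(k) = a(k)/(k+1)` and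
`b(0) = 0` (`shiftSum_succ`), which applies to the chain `1, H, e₂`, and
`P_p(t) = P_p(t+1) + 1/(1+t)^p`. Hence the difference `D` of the two sides is 1-periodic; it vanishes
at `0`, and `D(N+t) - D(N) → 0` because `H_N = O(N^(1/4))`. So
`D = 0` (`eq_zero_of_periodic`). The same argument one step lower, for `S_H = (P₂ - P₁²)/2`,
supplies the difference equation for `S_{e₂}`.

Expanding in powers of `x` (`represents_genSeries`) turns the identity into one between formal power
series (`genSeries_E2`), and the theorem compares coefficients of `x^m`. The factor `1/m` in the
cubic term arises from `x d/dx A³ = 3 A² · x dA/dx` (`natCast_mul_coeff_cube`).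
-/

/-- The harmonic number `H_n = ∑_{k=1}^n 1/k`. -/
noncomputable def H (n : ℕ) : ℝ := ∑ i ∈ Finset.range n, (1 : ℝ) / (i + 1)

/-- The generalized harmonic number `H_n^{(2)} = ∑_{k=1}^n 1/k²`. -/
noncomputable def H2 (n : ℕ) : ℝ := ∑ i ∈ Finset.range n, (1 : ℝ) / (i + 1) ^ 2

/-- The Riemann zeta function at integer arguments, `ζ(s) = ∑_{n=1}^∞ 1/n^s`. -/
noncomputable def zeta (s : ℕ) : ℝ := ∑' n : ℕ, (1 : ℝ) / (n + 1) ^ s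

open Filter Topology

/-! ### Shifted series and their difference equations -/

/-- The difference `1/(u+t)^(q+1) - 1/u^(q+1)`; the exponent is `q+1`, so that it is always positive. -/
noncomputable def shiftDiff (q : ℕ) (t u : ℝ) : ℝ := 1 / (u + t) ^ (q + 1) - 1 / u ^ (q + 1)

/-- The series `∑_k a(k) (1/(k+1+t)^(q+1) - 1/(k+1)^(q+1))`. For `a = 1` it is the function `P_{q+1}`,
and for `q = 0` the function `S_a` of the introduction. It converges for `t > -1` when `a` is
`SqrtBounded` (`summable_shiftSum`). -/
noncomputable def shiftSum (a : ℕ → ℝ) (q : ℕ) (t : ℝ) : ℝ :=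
  ∑' k : ℕ, a k * shiftDiff q t (k + 1)

/-- The sequence `a(k)` is `O(√(k+1))`. This growth condition covers `1`, `H`, `H²`, `H2` and `e₂`, and
keeps `∑ |a(k)|/(k+1)²` finite. -/
def SqrtBounded (a : ℕ → ℝ) : Prop := ∃ C : ℝ, ∀ k : ℕ, |a k| ≤ C * √((k : ℝ) + 1)

lemma sqrtBounded_one : SqrtBounded (fun _ => 1) :=
  ⟨1, fun k => by simp⟩

lemma summable_sqrt_div_sq : Summable (fun k : ℕ => √((k : ℝ) + 1) / ((k : ℝ) + 1) ^ 2) := by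
  have h : Summable (fun n : ℕ => ((n : ℝ) ^ (3 / 2 : ℝ))⁻¹) :=
    Real.summable_nat_rpow_inv.2 (by norm_num)
  refine ((summable_nat_add_iff 1).2 h).congr fun k => ?_
  have hk : (0 : ℝ) < (k : ℝ) + 1 := by positivity
  push_cast
  rw [Real.sqrt_eq_rpow, ← Real.rpow_natCast, ← Real.rpow_sub hk, ← Real.rpow_neg hk.le]
  norm_num

lemma summable_of_sqrtBounded {a : ℕ → ℝ} (ha : SqrtBounded a) :
    Summable (fun k : ℕ => |a k| / ((k : ℝ) + 1) ^ 2) := by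
  obtain ⟨C, hC⟩ := ha
  refine Summable.of_nonneg_of_le (fun k => by positivity) (fun k => ?_)
    (summable_sqrt_div_sq.mul_left C)
  rw [← mul_div_assoc]
  gcongr
  exact hC k

/-- The bound rests on `u + t ≥ min 1 (1+t) * u` for `u ≥ 1`, which keeps `u + t` comparable to `u`
even when `t` is close to `-1`. -/
lemma exists_shiftDiff_bound (q : ℕ) {t : ℝ} (ht : -1 < t) :
    ∃ C : ℝ, 0 ≤ C ∧ ∀ u : ℝ, 1 ≤ u → |shiftDiff q t u| ≤ C / u ^ 2 := by
  have hc : 0 < min 1 (1 + t) := lt_min one_pos (by linarith)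
  set c := min 1 (1 + t) with hcdef
  have hc1 : c ≤ 1 := min_le_left _ _
  have hct : c ≤ 1 + t := min_le_right _ _
  have key : ∀ u : ℝ, 1 ≤ u → c * u ≤ u + t := fun u hu => by nlinarith
  have base : ∀ u : ℝ, 1 ≤ u → |1 / (u + t) - 1 / u| ≤ |t| / c / u ^ 2 := fun u hu => by
    have h1 := key u hu
    have hu0 : 0 < u := by linarith
    have h2 : 0 < c * u := by positivity
    have h3 : 0 < u + t := by linarith
    rw [show 1 / (u + t) - 1 / u = -t / ((u + t) * u) by field_simp; ring, abs_div, abs_neg,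
      abs_of_pos (mul_pos h3 hu0), div_div]
    exact div_le_div_of_nonneg_left (abs_nonneg _) (by positivity) (by nlinarith)
  induction q with
  | zero => exact ⟨|t| / c, by positivity, fun u hu => by simpa [shiftDiff] using base u hu⟩
  | succ q ih =>
    obtain ⟨C, hC0, hC⟩ := ih
    refine ⟨C / c + |t| / c, by positivity, fun u hu => ?_⟩
    have h1 := key u hu
    have hu0 : 0 < u := by linarith
    have h3 : 0 < u + t := by nlinarith
    have e : shiftDiff (q + 1) t u =
        1 / (u + t) * shiftDiff q t u + 1 / u ^ (q + 1) * (1 / (u + t) - 1 / u) := by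
      unfold shiftDiff
      field_simp
      ring
    have b1 : |1 / (u + t)| ≤ 1 / c := by
      rw [abs_of_pos (by positivity)]
      exact one_div_le_one_div_of_le hc (by nlinarith)
    have b2 : |1 / u ^ (q + 1)| ≤ 1 := by
      rw [abs_of_pos (by positivity), div_le_one (by positivity)]
      exact one_le_pow₀ hu
    rw [e]
    calc _ ≤ |1 / (u + t)| * |shiftDiff q t u| + |1 / u ^ (q + 1)| * |1 / (u + t) - 1 / u| := by
          rw [← abs_mul, ← abs_mul]; exact abs_add_le _ _
      _ ≤ 1 / c * (C / u ^ 2) + 1 * (|t| / c / u ^ 2) := by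
          gcongr
          · exact hC u hu
          · exact base u hu
      _ = _ := by ring

lemma summable_shiftSum {a : ℕ → ℝ} (ha : SqrtBounded a) (q : ℕ) {t : ℝ} (ht : -1 < t) :
    Summable (fun k : ℕ => a k * shiftDiff q t (k + 1)) := by
  obtain ⟨C, hC0, hC⟩ := exists_shiftDiff_bound q ht
  refine Summable.of_norm_bounded ((summable_of_sqrtBounded ha).mul_left C) fun k => ?_
  rw [Real.norm_eq_abs, abs_mul]
  calc |a k| * |shiftDiff q t (k + 1)| ≤ |a k| * (C / ((k : ℝ) + 1) ^ 2) := by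
        gcongr
        exact hC _ (by linarith [(k.cast_nonneg : (0 : ℝ) ≤ k)])
    _ = _ := by ring

lemma tendsto_div_of_sqrtBounded {b : ℕ → ℝ} (hb : SqrtBounded b) {t : ℝ} (ht : -1 < t) (q : ℕ) :
    Tendsto (fun k : ℕ => b k / ((k : ℝ) + 1 + t) ^ (q + 1)) atTop (𝓝 0) := by
  obtain ⟨C, hC⟩ := hb
  have h1 : Tendsto (fun k : ℕ => √((k : ℝ) + 1)) atTop atTop :=
    Real.tendsto_sqrt_atTop.comp (tendsto_atTop_add_const_right _ _ tendsto_natCast_atTop_atTop)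
  have h2 : Tendsto (fun k : ℕ => 2 * C * (√((k : ℝ) + 1))⁻¹) atTop (𝓝 0) := by
    simpa using (tendsto_inv_atTop_zero.comp h1).const_mul (2 * C)
  refine squeeze_zero_norm' ?_ h2
  filter_upwards [eventually_ge_atTop 3] with k hk
  have hk' : (3 : ℝ) ≤ k := by exact_mod_cast hk
  have hs : 0 < √((k : ℝ) + 1) := by positivity
  have hs2 : √((k : ℝ) + 1) ^ 2 = (k : ℝ) + 1 := Real.sq_sqrt (by positivity)
  have hC0 : 0 ≤ C := by
    have := (abs_nonneg _).trans (hC k)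
    exact nonneg_of_mul_nonneg_left this hs
  have hp : 1 ≤ (k : ℝ) + 1 + t := by linarith
  have hp2 : ((k : ℝ) + 1) / 2 ≤ ((k : ℝ) + 1 + t) ^ (q + 1) :=
    le_trans (by linarith) (le_self_pow₀ hp (by omega))
  rw [Real.norm_eq_abs, abs_div, abs_of_pos (a := ((k : ℝ) + 1 + t) ^ (q + 1)) (by positivity)]
  calc _ ≤ C * √((k : ℝ) + 1) / (((k : ℝ) + 1) / 2) := by
        gcongr
        exact hC k
    _ = _ := by
        generalize √((k : ℝ) + 1) = s at hs hs2
        rw [← hs2]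
        field_simp

lemma tsum_telescope {f : ℕ → ℝ} (hf : Tendsto f atTop (𝓝 0))
    (hs : Summable (fun k => f (k + 1) - f k)) : ∑' k, (f (k + 1) - f k) = - f 0 := by
  have h1 := hs.hasSum.tendsto_sum_nat
  simp only [Finset.sum_range_sub] at h1
  have h2 := hf.sub_const (f 0)
  rw [zero_sub] at h2
  exact tendsto_nhds_unique h1 h2

/-- The difference equation `P_{q+1}(t) = P_{q+1}(t+1) + 1/(1+t)^(q+1)`. -/
lemma shiftSum_one_succ (q : ℕ) {t : ℝ} (ht : -1 < t) :
    shiftSum (fun _ => 1) q t = shiftSum (fun _ => 1) q (t + 1) + 1 / (1 + t) ^ (q + 1) := by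
  have s1 := summable_shiftSum sqrtBounded_one q ht
  have s2 := summable_shiftSum sqrtBounded_one q (t := t + 1) (by linarith)
  have e : ∀ k : ℕ, (1 : ℝ) * shiftDiff q (t + 1) (k + 1) - 1 * shiftDiff q t (k + 1) =
      (fun k : ℕ => 1 / ((k : ℝ) + 1 + t) ^ (q + 1)) (k + 1) -
      (fun k : ℕ => 1 / ((k : ℝ) + 1 + t) ^ (q + 1)) k := fun k => by
    simp only [shiftDiff]
    push_cast
    rw [show (k : ℝ) + 1 + (t + 1) = k + 1 + 1 + t by ring]
    ring
  have h := tsum_telescope (tendsto_div_of_sqrtBounded sqrtBounded_one ht q)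
    ((s2.sub s1).congr e)
  rw [← tsum_congr e, s2.tsum_sub s1] at h
  unfold shiftSum
  simp only [Nat.cast_zero, zero_add] at h
  linarith

/-- Summation by parts: the combination of the three series telescopes with terms `b(k)/(k+1+t)`. -/
lemma shiftSum_succ {a b : ℕ → ℝ} (ha : SqrtBounded a) (hb : SqrtBounded b) (hb0 : b 0 = 0)
    (hab : ∀ k, b (k + 1) = b k + a k / (k + 1)) {t : ℝ} (ht : -1 < t) :
    shiftSum b 0 t = shiftSum b 0 (t + 1) - shiftSum a 0 (t + 1) / (1 + t) := by
  have ht0 : (1 + t) ≠ 0 := by linarith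
  have s1 := summable_shiftSum hb 0 ht
  have s2 := summable_shiftSum hb 0 (t := t + 1) (by linarith)
  have s3 := (summable_shiftSum ha 0 (t := t + 1) (by linarith)).div_const (1 + t)
  have e : ∀ k : ℕ, b k * shiftDiff 0 (t + 1) (k + 1) - b k * shiftDiff 0 t (k + 1) -
      a k * shiftDiff 0 (t + 1) (k + 1) / (1 + t) =
      (fun k : ℕ => b k / ((k : ℝ) + 1 + t) ^ (0 + 1)) (k + 1) -
      (fun k : ℕ => b k / ((k : ℝ) + 1 + t) ^ (0 + 1)) k := fun k => by
    simp only [shiftDiff, hab]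
    have hk : (0 : ℝ) ≤ k := k.cast_nonneg
    have h1 : (k : ℝ) + 1 ≠ 0 := by positivity
    have h2 : (k : ℝ) + 1 + t ≠ 0 := by linarith
    have h3 : (k : ℝ) + 1 + 1 + t ≠ 0 := by linarith
    push_cast
    rw [show (k : ℝ) + 1 + (t + 1) = k + 1 + 1 + t by ring]
    field_simp
    ring
  have h := tsum_telescope (tendsto_div_of_sqrtBounded hb ht 0) (((s2.sub s1).sub s3).congr e)
  rw [← tsum_congr e, (s2.sub s1).tsum_sub s3, s2.tsum_sub s1, tsum_div_const, hb0] at h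
  unfold shiftSum
  simp only [zero_div, neg_zero] at h
  linarith

lemma shiftSum_zero (a : ℕ → ℝ) (q : ℕ) : shiftSum a q 0 = 0 := by
  simp [shiftSum, shiftDiff]

lemma shiftSum_natCast_sub (a : ℕ → ℝ) (ha : SqrtBounded a) (q : ℕ) {t : ℝ} (ht : -1 < t) (N : ℕ) :
    shiftSum a q (N + t) - shiftSum a q N =
      ∑' k : ℕ, a k * shiftDiff q t ((k + N : ℕ) + 1) := by
  have hN : (0 : ℝ) ≤ N := N.cast_nonneg
  have s1 := summable_shiftSum ha q (t := N + t) (by linarith)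
  have s2 := summable_shiftSum ha q (t := N) (by linarith)
  unfold shiftSum
  rw [← s1.tsum_sub s2]
  refine tsum_congr fun k => ?_
  simp only [shiftDiff]
  push_cast
  rw [show (k : ℝ) + 1 + (N + t) = k + N + 1 + t by ring,
    show (k : ℝ) + 1 + N = k + N + 1 by ring]
  ring

/-- Dominated convergence for a weighted increment of `shiftSum`: after reindexing, its terms are
`O((k+N+1)^(-3/2))`, which is at most `O((k+1)^(-3/2))` and tends to `0` for each `k` as `N → ∞`. -/
lemma tendsto_mul_shiftSum_sub {a w : ℕ → ℝ} (ha : SqrtBounded a) {C : ℝ}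
    (hC : ∀ N k : ℕ, |w N * a k| ≤ C * √(((k + N : ℕ) : ℝ) + 1)) (q : ℕ) {t : ℝ} (ht : -1 < t) :
    Tendsto (fun N : ℕ => w N * (shiftSum a q (N + t) - shiftSum a q N)) atTop (𝓝 0) := by
  obtain ⟨D, hD0, hD⟩ := exists_shiftDiff_bound q ht
  set g : ℕ → ℝ := fun k => √((k : ℝ) + 1) / ((k : ℝ) + 1) ^ 2 with hg
  have hbd : ∀ N k : ℕ, ‖w N * (a k * shiftDiff q t ((k + N : ℕ) + 1))‖ ≤ C * D * g (k + N) := by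
    intro N k
    rw [← mul_assoc, Real.norm_eq_abs, abs_mul]
    have h0 := hC N k
    calc _ ≤ (C * √(((k + N : ℕ) : ℝ) + 1)) * (D / (((k + N : ℕ) : ℝ) + 1) ^ 2) := by
          refine mul_le_mul h0 (hD _ ?_) (abs_nonneg _) ((abs_nonneg _).trans h0)
          linarith [((k + N).cast_nonneg : (0 : ℝ) ≤ (k + N : ℕ))]
      _ = _ := by simp only [hg]; ring
  have hC0 : 0 ≤ C := by
    have := (abs_nonneg _).trans (hC 0 0)
    simpa using this
  have hmono : ∀ N k : ℕ, g (k + N) ≤ g k := by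
    have hg' : ∀ k : ℕ, g k = 1 / (((k : ℝ) + 1) * √((k : ℝ) + 1)) := fun k => by
      have hk : (0 : ℝ) < (k : ℝ) + 1 := by positivity
      have hs : 0 < √((k : ℝ) + 1) := by positivity
      have hs2 : √((k : ℝ) + 1) ^ 2 = (k : ℝ) + 1 := Real.sq_sqrt (by positivity)
      simp only [hg]
      rw [div_eq_div_iff (by positivity) (by positivity)]
      linear_combination ((k : ℝ) + 1) * hs2
    intro N k
    rw [hg', hg']
    have : (k : ℝ) ≤ ((k + N : ℕ) : ℝ) := by exact_mod_cast Nat.le_add_right k N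
    gcongr
  have hsum : Summable g := summable_sqrt_div_sq
  have h := tendsto_tsum_of_dominated_convergence (𝓕 := atTop)
    (f := fun N k : ℕ => w N * (a k * shiftDiff q t ((k + N : ℕ) + 1))) (g := fun _ => 0)
    (hsum.mul_left (C * D)) (fun k => ?_) (Eventually.of_forall fun N k =>
      (hbd N k).trans (mul_le_mul_of_nonneg_left (hmono N k) (by positivity)))
  · simp only [tsum_zero] at h
    refine h.congr fun N => ?_
    rw [shiftSum_natCast_sub a ha q ht, tsum_mul_left]
  · refine squeeze_zero_norm (fun N => hbd N k) ?_
    have h1 : Tendsto (fun N => g (k + N)) atTop (𝓝 0) := by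
      simpa only [add_comm k] using (tendsto_add_atTop_iff_nat k).2 hsum.tendsto_atTop_zero
    simpa using h1.const_mul (C * D)

/-! ### Growth of harmonic numbers -/

lemma H_succ (n : ℕ) : H (n + 1) = H n + 1 / (n + 1) := by
  simp [H, Finset.sum_range_succ]

lemma H2_succ (n : ℕ) : H2 (n + 1) = H2 n + 1 / (n + 1) ^ 2 := by
  simp [H2, Finset.sum_range_succ]

lemma H_zero : H 0 = 0 := by simp [H]

lemma H2_zero : H2 0 = 0 := by simp [H2]

lemma H_nonneg (n : ℕ) : 0 ≤ H n := Finset.sum_nonneg fun i _ => by positivity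

lemma H2_nonneg (n : ℕ) : 0 ≤ H2 n := Finset.sum_nonneg fun i _ => by positivity

/-- The crude bound `H_n ≤ 4 n^(1/4)`; the exponent `1/4` makes `H_n²` of order `√n`. -/
lemma H_le (n : ℕ) : H n ≤ 4 * √√n := by
  induction n with
  | zero => simp [H_zero]
  | succ n ih =>
    rw [H_succ]
    push_cast
    have hv0 : 0 ≤ √√(n : ℝ) := by positivity
    have hv : √√(n : ℝ) ^ 4 = n := by
      rw [show √√(n : ℝ) ^ 4 = (√√(n : ℝ) ^ 2) ^ 2 by ring, Real.sq_sqrt (by positivity),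
        Real.sq_sqrt (by positivity)]
    have hu1 : 1 ≤ √√((n : ℝ) + 1) := by simp
    have hu : √√((n : ℝ) + 1) ^ 4 = n + 1 := by
      rw [show √√((n : ℝ) + 1) ^ 4 = (√√((n : ℝ) + 1) ^ 2) ^ 2 by ring,
        Real.sq_sqrt (by positivity), Real.sq_sqrt (by positivity)]
    have huv : √√(n : ℝ) ≤ √√((n : ℝ) + 1) :=
      Real.sqrt_le_sqrt (Real.sqrt_le_sqrt (by linarith))
    generalize √√(n : ℝ) = v at *
    generalize √√((n : ℝ) + 1) = u at *
    suffices h : 1 / ((n : ℝ) + 1) ≤ 4 * (u - v) by linarith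
    rw [← hu, div_le_iff₀ (by positivity)]
    -- `u` and `v` are the fourth roots of `n + 1` and `n`, and `u⁴ - v⁴ = 1`.
    have h1 : 1 = (u - v) * (u ^ 3 + u ^ 2 * v + u * v ^ 2 + v ^ 3) := by
      linear_combination hv - hu
    have h2 : u ^ 3 + u ^ 2 * v + u * v ^ 2 + v ^ 3 ≤ u ^ 3 + u ^ 2 * u + u * u ^ 2 + u ^ 3 := by
      gcongr
    have h3 : u ^ 3 ≤ u ^ 4 := pow_le_pow_right₀ hu1 (by norm_num)
    have h4 : 0 ≤ u - v := by linarith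
    calc 1 = (u - v) * (u ^ 3 + u ^ 2 * v + u * v ^ 2 + v ^ 3) := h1
      _ ≤ (u - v) * (4 * u ^ 4) := mul_le_mul_of_nonneg_left (by linarith) h4
      _ = _ := by ring

lemma H_sq_le (n : ℕ) : H n ^ 2 ≤ 16 * √((n : ℝ) + 1) := by
  have h := H_le n
  have h0 := H_nonneg n
  calc H n ^ 2 ≤ (4 * √√n) ^ 2 := by gcongr
    _ = 16 * √n := by rw [mul_pow, Real.sq_sqrt (by positivity)]; norm_num
    _ ≤ _ := by gcongr; linarith

/-- `e₂(n) = ∑_{1 ≤ i < j ≤ n} 1/(ij)`, the second elementary symmetric function of `1, 1/2, …, 1/n`,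
written through the power sums. -/
noncomputable def E2 (n : ℕ) : ℝ := (H n ^ 2 - H2 n) / 2

lemma E2_zero : E2 0 = 0 := by simp [E2, H_zero, H2_zero]

lemma E2_succ (n : ℕ) : E2 (n + 1) = E2 n + H n / (n + 1) := by
  simp only [E2, H_succ, H2_succ]
  have : (n : ℝ) + 1 ≠ 0 := by positivity
  field_simp
  ring

lemma E2_nonneg (n : ℕ) : 0 ≤ E2 n := by
  induction n with
  | zero => rw [E2_zero]
  | succ n ih =>
    rw [E2_succ]
    have := H_nonneg n
    positivity

lemma sqrtBounded_H_sq : SqrtBounded (fun n => H n ^ 2) :=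
  ⟨16, fun n => by rw [abs_of_nonneg (sq_nonneg _)]; exact H_sq_le n⟩

lemma sqrtBounded_H : SqrtBounded H := by
  refine ⟨17, fun n => ?_⟩
  rw [abs_of_nonneg (H_nonneg n)]
  have h1 : 1 ≤ √((n : ℝ) + 1) := by simp
  nlinarith [H_sq_le n, sq_nonneg (H n - 1)]

lemma sqrtBounded_E2 : SqrtBounded E2 := by
  refine ⟨16, fun n => ?_⟩
  rw [abs_of_nonneg (E2_nonneg n)]
  have h1 : 0 ≤ √((n : ℝ) + 1) := by positivity
  have := H_sq_le n
  have := H2_nonneg n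
  unfold E2
  linarith

lemma sqrtBounded_H2 : SqrtBounded H2 := by
  refine ⟨16, fun n => ?_⟩
  rw [abs_of_nonneg (H2_nonneg n)]
  have := H_sq_le n
  have := E2_nonneg n
  unfold E2 at this
  linarith

lemma tendsto_shiftSum_sub {a : ℕ → ℝ} (ha : SqrtBounded a) (q : ℕ) {t : ℝ} (ht : -1 < t) :
    Tendsto (fun N : ℕ => shiftSum a q (N + t) - shiftSum a q N) atTop (𝓝 0) := by
  obtain ⟨C, hC⟩ := id ha
  have hC0 : 0 ≤ C := by simpa using (abs_nonneg _).trans (hC 0)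
  refine (tendsto_mul_shiftSum_sub (w := fun _ => 1) ha (C := C) (fun N k => ?_) q ht).congr
    fun N => one_mul _
  rw [one_mul]
  refine (hC k).trans ?_
  push_cast
  gcongr
  linarith [(N.cast_nonneg : (0 : ℝ) ≤ N)]

lemma tendsto_mul_shiftSum_one_sub {w : ℕ → ℝ} (hw : SqrtBounded w) (q : ℕ) {t : ℝ}
    (ht : -1 < t) :
    Tendsto (fun N : ℕ => w N * (shiftSum (fun _ => 1) q (N + t) - shiftSum (fun _ => 1) q N))
      atTop (𝓝 0) := by
  obtain ⟨C, hC⟩ := hw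
  have hC0 : 0 ≤ C := by simpa using (abs_nonneg _).trans (hC 0)
  refine tendsto_mul_shiftSum_sub sqrtBounded_one (C := C) (fun N k => ?_) q ht
  rw [mul_one]
  refine (hC N).trans ?_
  push_cast
  gcongr
  linarith [(k.cast_nonneg : (0 : ℝ) ≤ k)]

lemma shiftSum_one_zero_natCast (N : ℕ) : shiftSum (fun _ => 1) 0 N = -H N := by
  induction N with
  | zero => simp [shiftSum_zero, H_zero]
  | succ N ih =>
    have hN : (0 : ℝ) ≤ N := N.cast_nonneg
    have h := shiftSum_one_succ 0 (t := N) (by linarith)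
    rw [H_succ]
    push_cast
    rw [ih, zero_add, pow_one, add_comm (1 : ℝ)] at h
    linarith

lemma shiftSum_one_one_natCast (N : ℕ) : shiftSum (fun _ => 1) 1 N = -H2 N := by
  induction N with
  | zero => simp [shiftSum_zero, H2_zero]
  | succ N ih =>
    have hN : (0 : ℝ) ≤ N := N.cast_nonneg
    have h := shiftSum_one_succ 1 (t := N) (by linarith)
    rw [H2_succ]
    push_cast
    rw [ih, one_add_one_eq_two, add_comm (1 : ℝ)] at h
    linarith

/-! ### Closed forms of the shifted series -/

/-- A 1-periodic function on `(-1, ∞)` that vanishes at `0` and whose increments `D(N+t) - D(N)` tend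
to `0` is zero: these increments do not depend on `N`. -/
lemma eq_zero_of_periodic {D : ℝ → ℝ} (hD : ∀ t, -1 < t → D t = D (t + 1)) (h0 : D 0 = 0)
    (hlim : ∀ t, -1 < t → Tendsto (fun N : ℕ => D (N + t) - D N) atTop (𝓝 0)) {t : ℝ}
    (ht : -1 < t) : D t = 0 := by
  have per : ∀ s, -1 < s → ∀ N : ℕ, D (N + s) = D s := fun s hs N => by
    induction N with
    | zero => simp
    | succ N ih =>
      have hN : (0 : ℝ) ≤ N := N.cast_nonneg
      rw [← ih, hD (N + s) (by linarith)]
      push_cast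
      ring_nf
  refine tendsto_nhds_unique (tendsto_const_nhds.congr fun N : ℕ => ?_) (hlim t ht)
  have h1 := per t ht N
  have h2 := per 0 (by norm_num) N
  rw [add_zero, h0] at h2
  rw [h1, h2, sub_zero]

/-- `S_H = (P₂ - P₁²)/2`, the generating-function form of Euler's evaluation of `∑ H_k/(k+1)^(m+1)`. -/
lemma shiftSum_H {t : ℝ} (ht : -1 < t) :
    shiftSum H 0 t = shiftSum (fun _ => 1) 1 t / 2 - shiftSum (fun _ => 1) 0 t ^ 2 / 2 := by
  have := eq_zero_of_periodic (D := fun t => shiftSum H 0 t -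
    (shiftSum (fun _ => 1) 1 t / 2 - shiftSum (fun _ => 1) 0 t ^ 2 / 2)) ?_ ?_ ?_ ht
  · linarith
  · intro t ht
    have ht0 : 1 + t ≠ 0 := by linarith
    rw [shiftSum_succ sqrtBounded_one sqrtBounded_H H_zero H_succ ht, shiftSum_one_succ 0 ht,
      shiftSum_one_succ 1 ht]
    field_simp
    ring
  · simp [shiftSum_zero]
  · intro t ht
    have hH := tendsto_shiftSum_sub sqrtBounded_H 0 ht
    have h0 := tendsto_shiftSum_sub sqrtBounded_one 0 ht
    have h1 := tendsto_shiftSum_sub sqrtBounded_one 1 ht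
    have hH0 := tendsto_mul_shiftSum_one_sub sqrtBounded_H 0 ht
    have h := (hH.sub (h1.div_const 2)).sub ((hH0.sub ((h0.mul h0).div_const 2)))
    simp only [mul_zero, zero_div, sub_zero] at h
    refine h.congr fun N => ?_
    have e := shiftSum_one_zero_natCast N
    rw [show H N = -shiftSum (fun _ => 1) 0 N by linarith]
    ring

/-- `S_{e₂} = P₃/3 - P₁ P₂/2 + P₁³/6`. -/
lemma shiftSum_E2 {t : ℝ} (ht : -1 < t) :
    shiftSum E2 0 t = shiftSum (fun _ => 1) 2 t / 3 -
      shiftSum (fun _ => 1) 0 t * shiftSum (fun _ => 1) 1 t / 2 +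
      shiftSum (fun _ => 1) 0 t ^ 3 / 6 := by
  have := eq_zero_of_periodic (D := fun t => shiftSum E2 0 t - (shiftSum (fun _ => 1) 2 t / 3 -
      shiftSum (fun _ => 1) 0 t * shiftSum (fun _ => 1) 1 t / 2 +
      shiftSum (fun _ => 1) 0 t ^ 3 / 6)) ?_ ?_ ?_ ht
  · linarith
  · intro t ht
    have ht0 : 1 + t ≠ 0 := by linarith
    rw [shiftSum_succ sqrtBounded_H sqrtBounded_E2 E2_zero E2_succ ht,
      shiftSum_H (t := t + 1) (by linarith), shiftSum_one_succ 0 ht,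
      shiftSum_one_succ 1 ht, shiftSum_one_succ 2 ht]
    field_simp
    ring
  · simp [shiftSum_zero]
  · intro t ht
    -- With `P₁(N) = -H_N` and `P₂(N) = -H_N^{(2)}`, the increment is a polynomial in increments of the
    -- series, each multiplied by at most an `O(√N)` weight.
    have hE := tendsto_shiftSum_sub sqrtBounded_E2 0 ht
    have h0 := tendsto_shiftSum_sub sqrtBounded_one 0 ht
    have h1 := tendsto_shiftSum_sub sqrtBounded_one 1 ht
    have h2 := tendsto_shiftSum_sub sqrtBounded_one 2 ht
    have hH0 := tendsto_mul_shiftSum_one_sub sqrtBounded_H 0 ht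
    have hH1 := tendsto_mul_shiftSum_one_sub sqrtBounded_H 1 ht
    have hHH0 := tendsto_mul_shiftSum_one_sub sqrtBounded_H_sq 0 ht
    have hH20 := tendsto_mul_shiftSum_one_sub sqrtBounded_H2 0 ht
    have h := ((hE.sub (h2.div_const 3)).add
      (((h0.mul h1).sub (hH1.add hH20)).div_const 2)).sub
      ((((hHH0.const_mul 3).sub ((hH0.mul h0).const_mul 3)).add ((h0.mul h0).mul h0)).div_const 6)
    simp only [mul_zero, zero_div, sub_zero, add_zero] at h
    refine h.congr fun N => ?_
    have e := shiftSum_one_zero_natCast N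
    have e2 := shiftSum_one_one_natCast N
    rw [show H N = -shiftSum (fun _ => 1) 0 N by linarith,
      show H2 N = -shiftSum (fun _ => 1) 1 N by linarith]
    ring

/-! ### Power series expansions -/

/-- The Taylor series in `x` of `shiftSum a q (-x)`. The constant term is `0`, since
`shiftSum a q 0 = 0`; at `m = 0` and `q = 0` the series in the other branch may diverge. -/
noncomputable def genSeries (a : ℕ → ℝ) (q : ℕ) : PowerSeries ℝ :=
  PowerSeries.mk fun m =>
    if m = 0 then 0 else ((m + q).choose q : ℝ) * ∑' k : ℕ, a k / ((k : ℝ) + 1) ^ (m + q + 1)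

/-- The power series `φ` converges to `f` on the open interval `(-1, 1)`. -/
def Represents (φ : PowerSeries ℝ) (f : ℝ → ℝ) : Prop :=
  ∀ x : ℝ, |x| < 1 → HasSum (fun m => PowerSeries.coeff m φ * x ^ m) (f x)

lemma Represents.add {φ ψ : PowerSeries ℝ} {f g : ℝ → ℝ} (hf : Represents φ f)
    (hg : Represents ψ g) : Represents (φ + ψ) (fun x => f x + g x) := fun x hx => by
  simpa [add_mul] using (hf x hx).add (hg x hx)

lemma Represents.smul {φ : PowerSeries ℝ} {f : ℝ → ℝ} (hf : Represents φ f) (c : ℝ) :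
    Represents (c • φ) (fun x => c * f x) := fun x hx => by
  simpa [mul_assoc] using (hf x hx).mul_left c

lemma Represents.mul {φ ψ : PowerSeries ℝ} {f g : ℝ → ℝ} (hf : Represents φ f)
    (hg : Represents ψ g) : Represents (φ * ψ) (fun x => f x * g x) := fun x hx => by
  have h1 := summable_norm_iff.2 (hf x hx).summable
  have h2 := summable_norm_iff.2 (hg x hx).summable
  have h := (summable_norm_sum_mul_antidiagonal_of_summable_norm h1 h2).of_norm.hasSum
  rw [← tsum_mul_tsum_eq_tsum_sum_antidiagonal_of_summable_norm h1 h2, (hf x hx).tsum_eq,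
    (hg x hx).tsum_eq] at h
  refine h.congr_fun fun m => ?_
  rw [PowerSeries.coeff_mul, Finset.sum_mul]
  refine Finset.sum_congr rfl fun p hp => ?_
  rw [← Finset.HasAntidiagonal.mem_antidiagonal.1 hp, pow_add]
  ring

lemma Represents.unique {φ ψ : PowerSeries ℝ} {f g : ℝ → ℝ} (hf : Represents φ f)
    (hg : Represents ψ g) (hfg : ∀ x, |x| < 1 → f x = g x) : φ = ψ := by
  have key : ∀ {χ : PowerSeries ℝ}, Represents χ f → HasFPowerSeriesAt f
      (FormalMultilinearSeries.ofScalars ℝ fun m => PowerSeries.coeff m χ) 0 := fun {χ} h => by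
    rw [hasFPowerSeriesAt_iff]
    filter_upwards [Metric.ball_mem_nhds (0 : ℝ) one_pos] with x hx
    have hx' : |x| < 1 := by simpa using hx
    simpa [FormalMultilinearSeries.coeff_ofScalars, mul_comm] using h x hx'
  have h := (key hf).eq_formalMultilinearSeries
    (key (χ := ψ) fun x hx => by rw [hfg x hx]; exact hg x hx)
  ext m
  have := congrArg (fun p => FormalMultilinearSeries.coeff p m) h
  simpa [FormalMultilinearSeries.coeff_ofScalars] using this

/-- Expanding each `1/(k+1-x)^(q+1)` binomially and exchanging the order of summation, which absolute
summability of the double series permits. -/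
lemma represents_genSeries {a : ℕ → ℝ} (ha : SqrtBounded a) (q : ℕ) :
    Represents (genSeries a q) (fun x => shiftSum a q (-x)) := by
  intro x hx
  set F : ℕ × ℕ → ℝ := fun p => if p.2 = 0 then 0 else
    a p.1 * ((p.2 + q).choose q * x ^ p.2 / ((p.1 : ℝ) + 1) ^ (p.2 + q + 1)) with hF
  have hs : Summable F := by
    have h1 := summable_of_sqrtBounded ha
    have h2 := (hasSum_choose_mul_geometric_of_norm_lt_one q (r := |x|) (by simpa using hx)).summable
    refine Summable.of_norm_bounded (h1.mul_of_nonneg h2 (fun k => by positivity)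
      (fun m => by positivity)) fun p => ?_
    obtain ⟨k, m⟩ := p
    simp only [hF]
    split_ifs with hm
    · rw [norm_zero]; positivity
    · have hm1 : 2 ≤ m + q + 1 := by omega
      have hk : (1 : ℝ) ≤ (k : ℝ) + 1 := by linarith [(k.cast_nonneg : (0 : ℝ) ≤ k)]
      rw [Real.norm_eq_abs, abs_mul, abs_div, abs_mul, abs_pow, Nat.abs_cast,
        abs_of_pos (a := ((k : ℝ) + 1) ^ (m + q + 1)) (by positivity), div_mul_eq_mul_div,
        ← mul_div_assoc]
      gcongr
  have hrow : ∀ k : ℕ, HasSum (fun m => F (k, m)) (a k * shiftDiff q (-x) (k + 1)) := fun k => by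
    have hk : (1 : ℝ) ≤ (k : ℝ) + 1 := by linarith [(k.cast_nonneg : (0 : ℝ) ≤ k)]
    have hxlt := (abs_lt.1 hx).2
    have hd : (k : ℝ) + 1 - x ≠ 0 := by linarith
    have hd2 : (k : ℝ) + 1 ≠ 0 := by positivity
    have h := hasSum_choose_mul_geometric_of_norm_lt_one q (r := x / ((k : ℝ) + 1)) (by
      rw [Real.norm_eq_abs, abs_div, abs_of_pos (a := (k : ℝ) + 1) (by positivity),
        div_lt_one (by positivity)]
      linarith)
    have h' := (hasSum_ite_sub_hasSum h 0).mul_left (a k / ((k : ℝ) + 1) ^ (q + 1))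
    have hv : a k * shiftDiff q (-x) (k + 1) = a k / ((k : ℝ) + 1) ^ (q + 1) *
        (1 / (1 - x / ((k : ℝ) + 1)) ^ (q + 1) -
          ((0 + q).choose q : ℝ) * (x / ((k : ℝ) + 1)) ^ 0) := by
      simp only [shiftDiff, zero_add, Nat.choose_self, Nat.cast_one, pow_zero, mul_one]
      rw [show 1 - x / ((k : ℝ) + 1) = (k + 1 - x) / (k + 1) by field_simp, div_pow,
        ← sub_eq_add_neg]
      field_simp
    rw [hv]
    refine h'.congr_fun fun m => ?_
    simp only [hF]
    split_ifs
    · simp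
    · rw [div_pow, show m + q + 1 = m + (q + 1) by ring, pow_add]
      field_simp
  have hcol : ∀ m : ℕ, HasSum (fun k => F (k, m))
      (PowerSeries.coeff m (genSeries a q) * x ^ m) := fun m => by
    have h := ((hs.comp_injective Prod.swap_injective).prod_factor m).hasSum
    have hv : PowerSeries.coeff m (genSeries a q) * x ^ m = ∑' k, F (k, m) := by
      simp only [genSeries, PowerSeries.coeff_mk, hF]
      split_ifs
      · simp
      · rw [mul_assoc, mul_comm _ (x ^ m), ← mul_assoc, ← tsum_mul_left]
        refine tsum_congr fun k => ?_
        ring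
    rw [hv]
    exact h
  have htot := hs.hasSum.prod_fiberwise hrow
  have hswap : HasSum (F ∘ Prod.swap) (∑' p, F p) :=
    (Equiv.prodComm ℕ ℕ).hasSum_iff.2 hs.hasSum
  have hfin := hswap.prod_fiberwise hcol
  rwa [← htot.tsum_eq] at hfin

/-- The identity `shiftSum_E2` as an identity of formal power series. -/
lemma genSeries_E2 : genSeries E2 0 = (1 / 3 : ℝ) • genSeries (fun _ => 1) 2 +
    (-(1 / 2) : ℝ) • (genSeries (fun _ => 1) 1 * genSeries (fun _ => 1) 0) +
    (1 / 6 : ℝ) • (genSeries (fun _ => 1) 0 * genSeries (fun _ => 1) 0 *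
      genSeries (fun _ => 1) 0) := by
  have r := fun q => represents_genSeries sqrtBounded_one q
  refine (represents_genSeries sqrtBounded_E2 0).unique
    ((((r 2).smul (1 / 3)).add (((r 1).mul (r 0)).smul (-(1 / 2)))).add
      ((((r 0).mul (r 0)).mul (r 0)).smul (1 / 6))) fun x hx => ?_
  rw [shiftSum_E2 (by linarith [(abs_lt.1 hx).2])]
  ring

/-! ### Comparison of coefficients -/

lemma coeff_genSeries_one (q m : ℕ) : PowerSeries.coeff m (genSeries (fun _ => 1) q) =
    if m = 0 then 0 else ((m + q).choose q : ℝ) * zeta (m + q + 1) := by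
  simp [genSeries, zeta]

/-- For series without constant term the two end terms of the Cauchy product vanish. -/
lemma coeff_mul_of_coeff_zero {φ ψ : PowerSeries ℝ} (hφ : PowerSeries.coeff 0 φ = 0)
    (hψ : PowerSeries.coeff 0 ψ = 0) (m : ℕ) : PowerSeries.coeff m (φ * ψ) =
      ∑ j ∈ Finset.Icc 1 (m - 1), PowerSeries.coeff j φ * PowerSeries.coeff (m - j) ψ := by
  rw [PowerSeries.coeff_mul, Finset.Nat.sum_antidiagonal_eq_sum_range_succ_mk]
  symm
  refine Finset.sum_subset (fun j hj => ?_) fun j hj hj' => ?_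
  · simp only [Finset.mem_Icc, Finset.mem_range] at *
    omega
  · simp only [Finset.mem_Icc, Finset.mem_range] at *
    obtain rfl | rfl : j = 0 ∨ j = m := by omega
    · simp [hφ]
    · simp [hψ]

/-- The coefficient of `X^m` in `X d/dX φ³ = 3 φ² · X dφ/dX`. -/
lemma natCast_mul_coeff_cube (φ : PowerSeries ℝ) (hφ : PowerSeries.coeff 0 φ = 0) (m : ℕ) :
    (m : ℝ) * PowerSeries.coeff m (φ * φ * φ) = 3 * ∑ l ∈ Finset.Icc 1 (m - 1),
      ((m - l : ℕ) : ℝ) * PowerSeries.coeff (m - l) φ * PowerSeries.coeff l (φ * φ) := by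
  -- `θ` is the Euler derivative of `φ`, which multiplies the `n`-th coefficient by `n`.
  set θ : PowerSeries ℝ := PowerSeries.X * PowerSeries.derivative ℝ φ with hθ
  have cX : ∀ (χ : PowerSeries ℝ) (n : ℕ),
      PowerSeries.coeff n (PowerSeries.X * PowerSeries.derivative ℝ χ) =
        (n : ℝ) * PowerSeries.coeff n χ := fun χ n => by
    cases n with
    | zero => simp
    | succ n =>
      rw [PowerSeries.coeff_succ_X_mul, PowerSeries.coeff_derivative]
      push_cast
      ring
  have h1 : PowerSeries.X * PowerSeries.derivative ℝ (φ * φ * φ) = 3 * ((φ * φ) * θ) := by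
    simp only [Derivation.leibniz, smul_eq_mul, hθ]
    ring
  rw [← cX, h1, show (3 : PowerSeries ℝ) = PowerSeries.C (3 : ℝ) from (map_ofNat _ 3).symm,
    PowerSeries.coeff_C_mul, coeff_mul_of_coeff_zero (by simp [PowerSeries.coeff_mul, hφ])
      (by rw [hθ, cX]; simp)]
  congr 1
  refine Finset.sum_congr rfl fun l _ => ?_
  rw [hθ, cX]
  ring

/-- For an integer `m ≥ 1`,
`∑_{k=0}^∞ (H_k² − H_k^{(2)})/(k+1)^(m+1)
  = ((m+1)(m+2)/3)·ζ(m+3) − ∑_{j=1}^{m−1} (j+1)·ζ(j+2)·ζ(m+1−j)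
    + (1/m)·∑_{ℓ=1}^{m−1} (m−ℓ)·ζ(m−ℓ+1)·∑_{j=1}^{ℓ−1} ζ(j+1)·ζ(ℓ−j+1)`. -/
theorem sum_harmonic_sq_shifted (m : ℕ) (hm : 1 ≤ m) :
    (∑' k : ℕ, (H k ^ 2 - H2 k) / (k + 1 : ℝ) ^ (m + 1)) =
      ((m : ℝ) + 1) * ((m : ℝ) + 2) / 3 * zeta (m + 3) -
      (∑ j ∈ Finset.Icc 1 (m - 1), ((j : ℝ) + 1) * zeta (j + 2) * zeta (m + 1 - j)) +
      1 / (m : ℝ) *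
        (∑ l ∈ Finset.Icc 1 (m - 1), ((m - l : ℕ) : ℝ) * zeta (m - l + 1) *
          ∑ j ∈ Finset.Icc 1 (l - 1), zeta (j + 1) * zeta (l - j + 1)) := by
  have hm0 : m ≠ 0 := by omega
  have hmR : (m : ℝ) ≠ 0 := by exact_mod_cast hm0
  have h := congrArg (fun φ => 2 * PowerSeries.coeff m φ) genSeries_E2
  have z : ∀ q, PowerSeries.coeff 0 (genSeries (fun _ => 1) q) = 0 := fun q => by
    simp [coeff_genSeries_one]
  have hcube : PowerSeries.coeff m (genSeries (fun _ => 1) 0 * genSeries (fun _ => 1) 0 *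
      genSeries (fun _ => 1) 0) = 3 * (1 / (m : ℝ) *
        (∑ l ∈ Finset.Icc 1 (m - 1), ((m - l : ℕ) : ℝ) * zeta (m - l + 1) *
          ∑ j ∈ Finset.Icc 1 (l - 1), zeta (j + 1) * zeta (l - j + 1))) := by
    have e := natCast_mul_coeff_cube _ (z 0) m
    have e2 : ∑ l ∈ Finset.Icc 1 (m - 1), ((m - l : ℕ) : ℝ) *
        PowerSeries.coeff (m - l) (genSeries (fun _ => 1) 0) *
        PowerSeries.coeff l (genSeries (fun _ => 1) 0 * genSeries (fun _ => 1) 0) =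
        ∑ l ∈ Finset.Icc 1 (m - 1), ((m - l : ℕ) : ℝ) * zeta (m - l + 1) *
          ∑ j ∈ Finset.Icc 1 (l - 1), zeta (j + 1) * zeta (l - j + 1) := by
      refine Finset.sum_congr rfl fun l hl => ?_
      rw [Finset.mem_Icc] at hl
      rw [coeff_mul_of_coeff_zero (z 0) (z 0), coeff_genSeries_one, if_neg (by omega)]
      congr 1
      · simp
      · refine Finset.sum_congr rfl fun j hj => ?_
        rw [Finset.mem_Icc] at hj
        rw [coeff_genSeries_one, coeff_genSeries_one, if_neg (by omega), if_neg (by omega)]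
        simp
    rw [e2] at e
    field_simp
    linarith
  have hmul : PowerSeries.coeff m (genSeries (fun _ => 1) 1 * genSeries (fun _ => 1) 0) =
      ∑ j ∈ Finset.Icc 1 (m - 1), ((j : ℝ) + 1) * zeta (j + 2) * zeta (m + 1 - j) := by
    rw [coeff_mul_of_coeff_zero (z 1) (z 0)]
    refine Finset.sum_congr rfl fun j hj => ?_
    rw [Finset.mem_Icc] at hj
    rw [coeff_genSeries_one, coeff_genSeries_one, if_neg (by omega), if_neg (by omega),
      show m + 1 - j = m - j + 0 + 1 by omega]
    simp
  have hchoose : (((m + 2).choose 2 : ℕ) : ℝ) = ((m : ℝ) + 1) * ((m : ℝ) + 2) / 2 := by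
    rw [Nat.cast_choose_two]
    push_cast
    ring
  have hE : 2 * PowerSeries.coeff m (genSeries E2 0) =
      ∑' k : ℕ, (H k ^ 2 - H2 k) / (k + 1 : ℝ) ^ (m + 1) := by
    simp only [genSeries, PowerSeries.coeff_mk, if_neg hm0, Nat.choose_zero_right, Nat.cast_one,
      one_mul, add_zero]
    rw [← tsum_mul_left]
    refine tsum_congr fun k => ?_
    unfold E2
    ring
  simp only [map_add, PowerSeries.coeff_smul, hcube, hmul, smul_eq_mul, hE, coeff_genSeries_one,
    if_neg hm0, hchoose] at h
  rw [h]
  ring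
end

section
/- Let p ∈ ℂ be not a nonpositive integer, let x ∈ ℂ with Re(x) > -1, and let m ≥ 0 be an integer. Then ∑_{k=0}^∞ (-1)^k·C(x,k)/(p+k)^(m+1) = ((-1)^m/m!)·(d^m/ds^m)[Γ(x+1)Γ(s)/Γ(x+s+1)] evaluated at s = p, i.e. the m-th complex derivative at p of the function s ↦ Γ(x+1)Γ(s)/Γ(x+s+1). -/
/-!
For `Re s > 0`, expanding `(1 - t)^x` by the binomial series in Euler's integral
`B(s, x + 1) = ∫₀¹ t^(s-1) (1-t)^x dt` and integrating termwise gives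
`∑ (-1)^k C(x,k) / (s + k) = Γ(x+1) Γ(s) / Γ(x+s+1)`. Termwise integration is legitimate because
`C(x,k) = O(k^(-Re x - 1))`, which follows from Euler's limit formula for `Γ(-x)`.

Writing `F(s)` for the series, the recursion `(k+1) C(x,k+1) = (x-k) C(x,k)` makes
`(x+s+1) F(s+1) - s F(s)` telescope to `0`, so `F` and the Beta function obey the same functional
equation; this extends the identity to every `s` that is not a nonpositive integer.

Near such a point, `|s + k| ≥ c (k + 1)` uniformly, so the series converges normally and may be
differentiated termwise `m` times, which produces the factor `(-1)^m m!`.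
-/

/-- Generalized binomial coefficient `C(x,k) = Γ(x+1)/(Γ(k+1)·Γ(x−k+1))` for complex `x`. -/
noncomputable def cbinom (x : ℂ) (k : ℕ) : ℂ :=
  Complex.Gamma (x + 1) / (Complex.Gamma (k + 1) * Complex.Gamma (x - k + 1))

open Filter Topology MeasureTheory Set

/-- The signed coefficient `(-1)^k C(x,k)`, equal to the rising factorial quotient `(-x)_k / k!`. -/
noncomputable def signedBinom (x : ℂ) (k : ℕ) : ℂ := (-1 : ℂ) ^ k * cbinom x k

lemma cbinom_zero (x : ℂ) (hx : -1 < x.re) : cbinom x 0 = 1 := by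
  have h : Complex.Gamma (x + 1) ≠ 0 :=
    Complex.Gamma_ne_zero_of_re_pos (by simp; linarith)
  simp [cbinom, h]

/-- Valid for every `x` since `1 / Γ` is entire, with value `0` at the poles of `Γ`. -/
lemma cbinom_succ_mul (x : ℂ) (k : ℕ) :
    cbinom x (k + 1) * (k + 1) = cbinom x k * (x - k) := by
  have h1 : Complex.Gamma ((k : ℂ) + 1 + 1) = (k + 1) * Complex.Gamma (k + 1) :=
    Complex.Gamma_add_one _ (Nat.cast_add_one_ne_zero k)
  have h2 := Complex.one_div_Gamma_eq_self_mul_one_div_Gamma_add_one (x - k)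
  have h3 : (k : ℂ) + 1 ≠ 0 := Nat.cast_add_one_ne_zero k
  have h4 : x - ((k + 1 : ℕ) : ℂ) + 1 = x - k := by push_cast; ring
  unfold cbinom
  rw [h4]
  push_cast
  rw [h1]
  simp only [div_eq_mul_inv, mul_inv, h2]
  field_simp

lemma choose_succ_mul (x : ℂ) (k : ℕ) :
    Ring.choose x (k + 1) * (k + 1) = Ring.choose x k * (x - k) := by
  have h0 := Ring.descPochhammer_eq_factorial_smul_choose x k
  have h1 := Ring.descPochhammer_eq_factorial_smul_choose x (k + 1)
  rw [descPochhammer_succ_right, Polynomial.smeval_mul, h0] at h1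
  simp only [Polynomial.smeval_sub, Polynomial.smeval_X, Polynomial.smeval_natCast, nsmul_eq_mul,
    Nat.factorial_succ, pow_one, pow_zero, mul_one] at h1
  push_cast at h1
  have h2 : (k.factorial : ℂ) ≠ 0 := by exact_mod_cast k.factorial_ne_zero
  apply mul_left_cancel₀ h2
  linear_combination -h1

lemma cbinom_eq_choose (x : ℂ) (hx : -1 < x.re) (k : ℕ) : cbinom x k = Ring.choose x k := by
  induction k with
  | zero => simp [cbinom_zero x hx]
  | succ k ih =>
    have h3 : (k : ℂ) + 1 ≠ 0 := Nat.cast_add_one_ne_zero k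
    apply mul_right_cancel₀ h3
    rw [cbinom_succ_mul, choose_succ_mul, ih]

lemma signedBinom_succ_mul (x : ℂ) (k : ℕ) :
    signedBinom x (k + 1) * (k + 1) = signedBinom x k * (k - x) := by
  have := cbinom_succ_mul x k
  simp only [signedBinom, pow_succ]
  linear_combination (-(-1 : ℂ) ^ k) * this

lemma signedBinom_mul_factorial (x : ℂ) (hx : -1 < x.re) (n : ℕ) :
    signedBinom x n * n.factorial = ∏ j ∈ Finset.range n, (-x + j) := by
  induction n with
  | zero => simp [signedBinom, cbinom_zero x hx]
  | succ n ih =>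
    rw [Finset.prod_range_succ, ← ih, Nat.factorial_succ]
    push_cast
    linear_combination (n.factorial : ℂ) * signedBinom_succ_mul x n

/-- The coefficients are reciprocals of Euler's approximations to `Γ(-x)`. Both sides vanish once
`k` passes a natural number `x`. -/
lemma signedBinom_succ_eq_GammaSeq_inv (x : ℂ) (hx : -1 < x.re) {k : ℕ} (hk : k ≠ 0) :
    signedBinom x (k + 1) * (k + 1) = (Complex.GammaSeq (-x) k)⁻¹ * (k : ℂ) ^ (-x) := by
  have h := signedBinom_mul_factorial x hx (k + 1)
  have h1 : (k : ℂ) ^ (-x) ≠ 0 := by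
    rw [Complex.cpow_ne_zero_iff]; left; exact_mod_cast hk
  have h2 : (k.factorial : ℂ) ≠ 0 := by exact_mod_cast k.factorial_ne_zero
  rw [Complex.GammaSeq, ← h, Nat.factorial_succ]
  push_cast
  rw [inv_div]
  field_simp

lemma GammaSeq_inv_bounded (z : ℂ) : ∃ C : ℝ, 0 ≤ C ∧
    ∀ᶠ k : ℕ in atTop, ‖(Complex.GammaSeq z k)⁻¹‖ ≤ C := by
  by_cases hz : Complex.Gamma z = 0
  · -- At a pole `z = -m` the product in `GammaSeq z k` contains the factor `z + m = 0`.
    obtain ⟨m, rfl⟩ := (Complex.Gamma_eq_zero_iff z).1 hz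
    refine ⟨0, le_rfl, ?_⟩
    filter_upwards [eventually_ge_atTop m] with k hk
    have : ∏ j ∈ Finset.range (k + 1), (-(m : ℂ) + j) = 0 :=
      Finset.prod_eq_zero (i := m) (Finset.mem_range.2 (by omega)) (by simp)
    simp [Complex.GammaSeq, this]
  · have h := ((Complex.GammaSeq_tendsto_Gamma z).inv₀ hz).norm
    refine ⟨‖(Complex.Gamma z)⁻¹‖ + 1, by positivity, ?_⟩
    exact (h.eventually (gt_mem_nhds (lt_add_one _))).mono fun k hk => hk.le

/-- The size estimate `C(x,k) = O(k^(-Re x - 1))`. -/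
lemma signedBinom_bound (x : ℂ) (hx : -1 < x.re) : ∃ C : ℝ, 0 ≤ C ∧
    ∀ᶠ k : ℕ in atTop, ‖signedBinom x (k + 1)‖ ≤ C * (k : ℝ) ^ (-(x.re + 1)) := by
  obtain ⟨C, hC, h⟩ := GammaSeq_inv_bounded (-x)
  refine ⟨C, hC, ?_⟩
  filter_upwards [h, eventually_gt_atTop 0] with k hk hk0
  have h1 := congrArg norm (signedBinom_succ_eq_GammaSeq_inv x hx hk0.ne')
  have hk' : (0 : ℝ) < k := by exact_mod_cast hk0
  have h2 : ‖(k : ℂ) + 1‖ = k + 1 := by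
    have : ((k : ℂ) + 1) = ((k + 1 : ℕ) : ℂ) := by push_cast; rfl
    rw [this, Complex.norm_natCast]; push_cast; rfl
  rw [norm_mul, norm_mul, h2, Complex.norm_natCast_cpow_of_pos hk0, Complex.neg_re] at h1
  have h3 : (k : ℝ) ^ (-(x.re + 1)) = (k : ℝ) ^ (-x.re) / k := by
    rw [neg_add, ← sub_eq_add_neg, Real.rpow_sub_one hk'.ne']
  rw [h3, ← mul_div_assoc, le_div_iff₀ hk']
  calc ‖signedBinom x (k + 1)‖ * k ≤ ‖signedBinom x (k + 1)‖ * (k + 1) := by gcongr; linarith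
    _ = _ := h1
    _ ≤ _ := by gcongr

lemma signedBinom_tendsto_zero (x : ℂ) (hx : -1 < x.re) :
    Tendsto (signedBinom x) atTop (𝓝 0) := by
  obtain ⟨C, hC, h⟩ := signedBinom_bound x hx
  rw [← tendsto_add_atTop_iff_nat 1]
  refine squeeze_zero_norm' h ?_
  have := ((tendsto_rpow_neg_atTop (y := x.re + 1) (by linarith)).comp
    tendsto_natCast_atTop_atTop).const_mul C
  simpa using this

lemma signedBinom_summable (x : ℂ) (hx : -1 < x.re) :
    Summable fun k : ℕ => ‖signedBinom x k‖ / (k + 1) := by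
  obtain ⟨C, hC, h⟩ := signedBinom_bound x hx
  rw [← summable_nat_add_iff 1]
  have hs : Summable fun k : ℕ => C * (k : ℝ) ^ (-(x.re + 2)) :=
    (Real.summable_nat_rpow.2 (by linarith)).mul_left C
  refine hs.of_norm_bounded_eventually_nat ?_
  filter_upwards [h, eventually_gt_atTop 0] with k hk hk0
  have hk' : (0 : ℝ) < k := by exact_mod_cast hk0
  rw [norm_div, norm_norm, show -(x.re + 2) = -(x.re + 1) - 1 by ring,
    Real.rpow_sub_one hk'.ne', ← mul_div_assoc, Real.norm_of_nonneg (by positivity)]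
  push_cast
  gcongr
  linarith

/-- The distance from `p + k` to `0` grows at least linearly in `k`, with no exceptional `k`. -/
lemma exists_linear_lower_bound (p : ℂ) (hp : ∀ n : ℕ, p ≠ -n) :
    ∃ c : ℝ, 0 < c ∧ ∀ k : ℕ, c * (k + 1) ≤ ‖p + k‖ := by
  have fin : ∀ N : ℕ, ∃ c : ℝ, 0 < c ∧ ∀ k < N, c * ((k : ℝ) + 1) ≤ ‖p + k‖ := by
    intro N
    induction N with
    | zero => exact ⟨1, one_pos, by simp⟩
    | succ N ih =>
      obtain ⟨c, hc, h⟩ := ih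
      have hN : 0 < ‖p + N‖ := norm_pos_iff.2 fun h0 => hp N (eq_neg_of_add_eq_zero_left h0)
      refine ⟨min c (‖p + N‖ / (N + 1)), by positivity, fun k hk => ?_⟩
      rcases Nat.lt_succ_iff_lt_or_eq.1 hk with hk | rfl
      · exact le_trans (by gcongr; exact min_le_left _ _) (h k hk)
      · rw [← le_div_iff₀ (by positivity)]
        exact min_le_right _ _
  obtain ⟨N, hN⟩ := exists_nat_ge (2 * ‖p‖ + 1)
  obtain ⟨c, hc, h⟩ := fin N
  refine ⟨min c (1 / 2), by positivity, fun k => ?_⟩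
  rcases lt_or_ge k N with hk | hk
  · exact le_trans (by gcongr; exact min_le_left _ _) (h k hk)
  · have h1 : (N : ℝ) ≤ k := by exact_mod_cast hk
    have h2 : (k : ℝ) - ‖p‖ ≤ ‖p + k‖ := by
      have := norm_sub_norm_le (k : ℂ) (-p)
      rwa [Complex.norm_natCast, norm_neg, sub_neg_eq_add, add_comm (k : ℂ)] at this
    calc min c (1 / 2) * ((k : ℝ) + 1) ≤ 1 / 2 * (k + 1) := by gcongr; exact min_le_right _ _
      _ ≤ _ := by linarith

/-- The lower bound is uniform near `p`. -/
lemma lower_bound_on_ball {p : ℂ} {c : ℝ} (hc : 0 < c) (h : ∀ k : ℕ, c * (k + 1) ≤ ‖p + k‖)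
    {s : ℂ} (hs : s ∈ Metric.ball p (c / 2)) (k : ℕ) : c / 2 * (k + 1) ≤ ‖s + k‖ := by
  have h1 : ‖p + k‖ - ‖s + k‖ ≤ ‖p - s‖ := by
    have := norm_sub_norm_le (p + k) (s + k)
    rwa [add_sub_add_right_eq_sub] at this
  have h2 : ‖p - s‖ < c / 2 := by rwa [← dist_eq_norm, dist_comm]
  have h3 := h k
  have : 0 ≤ c * (k : ℝ) := by positivity
  linarith

section PartialFractions

variable {a : ℕ → ℂ}

lemma norm_term_le {c : ℝ} (hc : 0 < c) {s : ℂ} {k : ℕ} (h : c * (k + 1) ≤ ‖s + k‖) (m : ℕ) :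
    ‖a k / (s + k) ^ (m + 1)‖ ≤ (1 / c ^ (m + 1)) * (‖a k‖ / (k + 1)) := by
  rw [norm_div, norm_pow, one_div_mul_eq_div, div_div, mul_comm ((k : ℝ) + 1)]
  have h1 : (1 : ℝ) ≤ k + 1 := by linarith [(Nat.cast_nonneg k : (0 : ℝ) ≤ k)]
  gcongr
  calc c ^ (m + 1) * ((k : ℝ) + 1) ≤ c ^ (m + 1) * ((k : ℝ) + 1) ^ (m + 1) := by
        gcongr; exact le_self_pow₀ h1 (by omega)
    _ = (c * (k + 1)) ^ (m + 1) := (mul_pow _ _ _).symm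
    _ ≤ _ := by gcongr

lemma summable_norm_term (ha : Summable fun k : ℕ => ‖a k‖ / (k + 1)) {p : ℂ}
    (hp : ∀ n : ℕ, p ≠ -n) (m : ℕ) : Summable fun k : ℕ => ‖a k / (p + k) ^ (m + 1)‖ := by
  obtain ⟨c, hc, h⟩ := exists_linear_lower_bound p hp
  exact Summable.of_nonneg_of_le (fun _ => norm_nonneg _) (fun k => norm_term_le hc (h k) m)
    (ha.mul_left _)

lemma add_natCast_ne_zero {p : ℂ} (hp : ∀ n : ℕ, p ≠ -n) (k : ℕ) : p + k ≠ 0 :=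
  fun h0 => hp k (eq_neg_of_add_eq_zero_left h0)

lemma eventually_ne_neg_nat {p : ℂ} (hp : ∀ n : ℕ, p ≠ -n) :
    ∀ᶠ s : ℂ in 𝓝 p, ∀ n : ℕ, s ≠ -n := by
  obtain ⟨c, hc, h⟩ := exists_linear_lower_bound p hp
  filter_upwards [Metric.ball_mem_nhds p (half_pos hc)] with s hs n h0
  have h1 := lower_bound_on_ball hc h hs n
  rw [h0, neg_add_cancel, norm_zero] at h1
  have : 0 < c / 2 * ((n : ℝ) + 1) := by positivity
  linarith

lemma deriv_tsum_term (ha : Summable fun k : ℕ => ‖a k‖ / (k + 1)) {p : ℂ}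
    (hp : ∀ n : ℕ, p ≠ -n) (m : ℕ) :
    deriv (fun s => ∑' k : ℕ, a k / (s + k) ^ (m + 1)) p =
      -(m + 1) * ∑' k : ℕ, a k / (p + k) ^ (m + 2) := by
  obtain ⟨c, hc, h⟩ := exists_linear_lower_bound p hp
  have hne : ∀ s ∈ Metric.ball p (c / 2), ∀ k : ℕ, s + k ≠ 0 := by
    intro s hs k h0
    have h1 := lower_bound_on_ball hc h hs k
    rw [h0, norm_zero] at h1
    have : 0 < c / 2 * ((k : ℝ) + 1) := by positivity
    linarith
  have key := Complex.hasSum_deriv_of_summable_norm (U := Metric.ball p (c / 2)) (z := p)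
    (F := fun (k : ℕ) s => a k / (s + k) ^ (m + 1))
    (ha.mul_left (1 / (c / 2) ^ (m + 1)))
    (fun k s hs => by
      have := pow_ne_zero (m + 1) (hne s hs k)
      exact DifferentiableAt.differentiableWithinAt (by fun_prop (disch := assumption)))
    Metric.isOpen_ball
    (fun k s hs => norm_term_le (half_pos hc) (lower_bound_on_ball hc h hs k) m)
    (Metric.mem_ball_self (half_pos hc))
  rw [← key.tsum_eq, ← tsum_mul_left]
  refine tsum_congr fun k => ?_
  have h0 := add_natCast_ne_zero hp k
  have hd : HasDerivAt (fun s : ℂ => (s + k) ^ (m + 1))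
      (((m + 1 : ℕ) : ℂ) * (p + k) ^ m * 1) p := by
    exact ((hasDerivAt_id p).add_const (k : ℂ)).pow (m + 1)
  have hd2 := (hasDerivAt_const p (a k)).div hd (pow_ne_zero _ h0)
  rw [show (fun s : ℂ => a k / (s + k) ^ (m + 1)) =
    (fun _ => a k) / fun s : ℂ => (s + k) ^ (m + 1) from rfl, hd2.deriv]
  push_cast
  field_simp
  ring

lemma iteratedDeriv_tsum_term (ha : Summable fun k : ℕ => ‖a k‖ / (k + 1)) (m : ℕ) :
    ∀ p : ℂ, (∀ n : ℕ, p ≠ -n) →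
      iteratedDeriv m (fun s => ∑' k : ℕ, a k / (s + k)) p =
        (-1 : ℂ) ^ m * m.factorial * ∑' k : ℕ, a k / (p + k) ^ (m + 1) := by
  induction m with
  | zero => intro p hp; simp
  | succ m ih =>
    intro p hp
    have hE : iteratedDeriv m (fun s => ∑' k : ℕ, a k / (s + k)) =ᶠ[𝓝 p]
        fun s => (-1 : ℂ) ^ m * m.factorial * ∑' k : ℕ, a k / (s + k) ^ (m + 1) :=
      (eventually_ne_neg_nat hp).mono ih
    rw [iteratedDeriv_succ, hE.deriv_eq, deriv_const_mul_field, deriv_tsum_term ha hp,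
      Nat.factorial_succ]
    push_cast
    ring

end PartialFractions

lemma hasSum_signedBinom_mul_pow (x : ℂ) (hx : -1 < x.re) {t : ℝ} (ht : t ∈ Ioo (0 : ℝ) 1) :
    HasSum (fun k : ℕ => signedBinom x k * (t : ℂ) ^ k) ((1 - (t : ℂ)) ^ x) := by
  have hmem : (-(t : ℂ)) ∈ Metric.eball (0 : ℂ) 1 := by
    rw [← ENNReal.ofReal_one, Metric.eball_ofReal]
    simpa [abs_of_pos ht.1] using ht.2
  have h := (Complex.one_add_cpow_hasFPowerSeriesOnBall_zero (a := x)).hasSum hmem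
  simp only [zero_add, binomialSeries_apply, List.ofFn_const, List.prod_replicate,
    smul_eq_mul] at h
  rw [← sub_eq_add_neg] at h
  have hterm : (fun k : ℕ => signedBinom x k * (t : ℂ) ^ k) =
      fun k => Ring.choose x k * (-(t : ℂ)) ^ k := by
    funext k
    rw [signedBinom, cbinom_eq_choose x hx, neg_pow (t : ℂ)]
    ring
  rwa [hterm]

/-- Euler's Beta integral, expanded by the binomial series and integrated termwise. -/
lemma tsum_eq_of_re_pos (x : ℂ) (hx : -1 < x.re) {s : ℂ} (hs : 0 < s.re) :
    ∑' k : ℕ, signedBinom x k / (s + k) =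
      Complex.Gamma (x + 1) * Complex.Gamma s / Complex.Gamma (x + s + 1) := by
  have hB := Complex.betaIntegral_eq_Gamma_mul_div s (x + 1) hs (by simp; linarith)
  rw [show x + s + 1 = s + (x + 1) by ring, mul_comm (Complex.Gamma (x + 1)), ← hB,
    Complex.betaIntegral, intervalIntegral.integral_of_le zero_le_one,
    integral_Ioc_eq_integral_Ioo]
  have hF : ∀ (k : ℕ), ∀ t ∈ Ioo (0 : ℝ) 1, (t : ℂ) ^ (s - 1) * (signedBinom x k * (t : ℂ) ^ k) =
      signedBinom x k * (t : ℂ) ^ (s - 1 + k) := by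
    intro k t ht
    have : (t : ℂ) ≠ 0 := by exact_mod_cast ht.1.ne'
    rw [Complex.cpow_add _ _ this, Complex.cpow_natCast]
    ring
  have hre : ∀ k : ℕ, -1 < (s - 1 + k).re := by
    intro k
    have : (0 : ℝ) ≤ k := k.cast_nonneg
    simp; linarith
  have hint : ∀ k : ℕ, Integrable
      (fun t : ℝ => (t : ℂ) ^ (s - 1) * (signedBinom x k * (t : ℂ) ^ k))
      (volume.restrict (Ioo (0 : ℝ) 1)) := by
    intro k
    have h1 := (intervalIntegral.intervalIntegrable_cpow' (a := 0) (b := 1) (hre k))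
    rw [intervalIntegrable_iff_integrableOn_Ioo_of_le zero_le_one] at h1
    refine (h1.const_mul (signedBinom x k)).congr ?_
    filter_upwards [ae_restrict_mem measurableSet_Ioo] with t ht
    exact (hF k t ht).symm
  have hnorm : ∀ k : ℕ, ∫ t in Ioo (0 : ℝ) 1,
      ‖(t : ℂ) ^ (s - 1) * (signedBinom x k * (t : ℂ) ^ k)‖ =
        ‖signedBinom x k / (((s.re : ℝ) : ℂ) + k) ^ (0 + 1)‖ := by
    intro k
    have hk : (0 : ℝ) ≤ k := k.cast_nonneg
    have h1 : ∫ t in Ioo (0 : ℝ) 1, ‖(t : ℂ) ^ (s - 1) * (signedBinom x k * (t : ℂ) ^ k)‖ =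
        ∫ t in Ioo (0 : ℝ) 1, ‖signedBinom x k‖ * t ^ (s.re - 1 + k) := by
      refine setIntegral_congr_fun measurableSet_Ioo fun t ht => ?_
      rw [hF k t ht, norm_mul, Complex.norm_cpow_eq_rpow_re_of_pos ht.1]
      simp
    rw [h1, integral_const_mul, ← integral_Ioc_eq_integral_Ioo,
      ← intervalIntegral.integral_of_le zero_le_one, integral_rpow (Or.inl (by linarith)),
      show s.re - 1 + k + 1 = s.re + k by ring, Real.one_rpow,
      Real.zero_rpow (by linarith), zero_add, pow_one, norm_div,
      show ((s.re : ℝ) : ℂ) + k = ((s.re + k : ℝ) : ℂ) by push_cast; rfl,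
      Complex.norm_of_nonneg (by linarith)]
    ring
  have hval : ∀ k : ℕ, ∫ t in Ioo (0 : ℝ) 1,
      (t : ℂ) ^ (s - 1) * (signedBinom x k * (t : ℂ) ^ k) = signedBinom x k / (s + k) := by
    intro k
    have hk : (0 : ℝ) ≤ k := k.cast_nonneg
    have hsk : s + k ≠ 0 := by
      intro h0
      have := congrArg Complex.re h0
      simp at this
      linarith
    rw [setIntegral_congr_fun measurableSet_Ioo (hF k), integral_const_mul,
      ← integral_Ioc_eq_integral_Ioo,
      ← intervalIntegral.integral_of_le zero_le_one, integral_cpow (Or.inl (hre k)),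
      show s - 1 + k + 1 = s + k by ring, Complex.ofReal_one, Complex.one_cpow,
      Complex.ofReal_zero, Complex.zero_cpow hsk]
    ring
  have hsum : Summable fun k : ℕ => ∫ t in Ioo (0 : ℝ) 1,
      ‖(t : ℂ) ^ (s - 1) * (signedBinom x k * (t : ℂ) ^ k)‖ := by
    simp_rw [hnorm]
    refine summable_norm_term (signedBinom_summable x hx) (fun n h0 => ?_) 0
    have := congrArg Complex.re h0
    simp at this
    have hn : (0 : ℝ) ≤ n := n.cast_nonneg
    linarith
  have key := hasSum_integral_of_summable_integral_norm hint hsum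
  simp_rw [hval] at key
  rw [key.tsum_eq]
  refine setIntegral_congr_fun measurableSet_Ioo fun t ht => ?_
  rw [tsum_mul_left, (hasSum_signedBinom_mul_pow x hx ht).tsum_eq, add_sub_cancel_right]

/-- The functional equation of the Beta function, obtained from the series by telescoping. -/
lemma tsum_recurrence (x : ℂ) (hx : -1 < x.re) {s : ℂ} (hs : ∀ n : ℕ, s ≠ -n) :
    s * ∑' k : ℕ, signedBinom x k / (s + k) =
      (x + s + 1) * ∑' k : ℕ, signedBinom x k / (s + 1 + k) := by
  have hs1 : ∀ n : ℕ, s + 1 ≠ -n := by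
    intro n h
    apply hs (n + 1)
    push_cast
    linear_combination h
  have ha := signedBinom_summable x hx
  have S0 : Summable fun k : ℕ => signedBinom x k / (s + k) := by
    simpa using (summable_norm_term ha hs 0).of_norm
  have S1 : Summable fun k : ℕ => signedBinom x k / (s + 1 + k) := by
    simpa using (summable_norm_term ha hs1 0).of_norm
  set b : ℕ → ℂ := fun k => k * signedBinom x k / (s + k) with hb
  have hterm : ∀ k : ℕ, (x + s + 1) * (signedBinom x k / (s + 1 + k)) -
      s * (signedBinom x k / (s + k)) = b k - b (k + 1) := by
    intro k
    have h0 := add_natCast_ne_zero hs k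
    have h1 := add_natCast_ne_zero hs1 k
    have h2 : b (k + 1) = signedBinom x k * (k - x) / (s + 1 + k) := by
      rw [← signedBinom_succ_mul, hb]
      push_cast
      rw [show s + ((k : ℂ) + 1) = s + 1 + k by ring, mul_comm]
    rw [h2, hb]
    field_simp
    ring
  have hblim : Tendsto b atTop (𝓝 0) := by
    obtain ⟨c, hc, h⟩ := exists_linear_lower_bound s hs
    have hlim := (signedBinom_tendsto_zero x hx).norm.const_mul (1 / c)
    rw [norm_zero, mul_zero] at hlim
    refine squeeze_zero_norm (fun k => ?_) hlim
    have hpos : 0 < ‖s + k‖ := norm_pos_iff.2 (add_natCast_ne_zero hs k)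
    rw [hb]
    simp only
    rw [norm_div, norm_mul, Complex.norm_natCast, div_le_iff₀ hpos]
    calc (k : ℝ) * ‖signedBinom x k‖ = 1 / c * ‖signedBinom x k‖ * (c * k) := by field_simp
      _ ≤ 1 / c * ‖signedBinom x k‖ * ‖s + k‖ := by
        gcongr
        exact le_trans (by gcongr; linarith) (h k)
  have hS := (S1.mul_left (x + s + 1)).sub (S0.mul_left s)
  have hlim1 := hS.hasSum.tendsto_sum_nat
  simp_rw [hterm, Finset.sum_range_sub'] at hlim1
  have hlim2 : Tendsto (fun n => b 0 - b n) atTop (𝓝 0) := by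
    simpa [hb] using hblim.const_sub (b 0)
  have h0 := tendsto_nhds_unique hlim1 hlim2
  simp_rw [← hterm] at h0
  rw [(S1.mul_left (x + s + 1)).tsum_sub (S0.mul_left s), tsum_mul_left, tsum_mul_left] at h0
  exact (sub_eq_zero.1 h0).symm

/-- The case `m = 0`. The Beta function satisfies the same functional equation as the series, so
the identity propagates leftwards from the half-plane `0 < Re s` one unit strip at a time. -/
lemma tsum_eq_Gamma (x : ℂ) (hx : -1 < x.re) {s : ℂ} (hs : ∀ n : ℕ, s ≠ -n) :
    ∑' k : ℕ, signedBinom x k / (s + k) =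
      Complex.Gamma (x + 1) * Complex.Gamma s / Complex.Gamma (x + s + 1) := by
  obtain ⟨N, hN⟩ := exists_nat_gt (-s.re)
  induction N generalizing s with
  | zero => exact tsum_eq_of_re_pos x hx (by simpa using hN)
  | succ N ih =>
    have hs1 : ∀ n : ℕ, s + 1 ≠ -n := by
      intro n h
      apply hs (n + 1)
      push_cast
      linear_combination h
    have h0 : s ≠ 0 := by simpa using hs 0
    have h1 := ih hs1 (by push_cast at hN; simp; linarith)
    apply mul_left_cancel₀ h0
    rw [tsum_recurrence x hx hs, h1, Complex.Gamma_add_one s h0,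
      show x + (s + 1) + 1 = x + s + 1 + 1 by ring]
    -- This form of the functional equation of `1 / Γ` also covers `x + s + 1 = 0`.
    have h2 := Complex.one_div_Gamma_eq_self_mul_one_div_Gamma_add_one (x + s + 1)
    simp only [div_eq_mul_inv]
    rw [h2]
    ring

/-- For `p ∈ ℂ` not a nonpositive integer, `x ∈ ℂ` with `Re(x) > -1`, and `m ≥ 0`,
`∑_{k=0}^∞ (-1)^k·C(x,k)/(p+k)^(m+1)
  = ((-1)^m/m!)·(d^m/ds^m)[Γ(x+1)Γ(s)/Γ(x+s+1)]|_{s=p}`. -/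
theorem sum_alt_cbinom_eq (p : ℂ) (hp : ∀ n : ℕ, p ≠ -n) (x : ℂ) (hx : -1 < x.re)
    (m : ℕ) :
    (∑' k : ℕ, (-1 : ℂ) ^ k * cbinom x k / (p + k) ^ (m + 1)) =
      (-1 : ℂ) ^ m / Nat.factorial m *
        iteratedDeriv m
          (fun s : ℂ => Complex.Gamma (x + 1) * Complex.Gamma s / Complex.Gamma (x + s + 1))
          p := by
  have hE : (fun s : ℂ => Complex.Gamma (x + 1) * Complex.Gamma s / Complex.Gamma (x + s + 1))
      =ᶠ[𝓝 p] fun s => ∑' k : ℕ, signedBinom x k / (s + k) :=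
    (eventually_ne_neg_nat hp).mono fun s hs => (tsum_eq_Gamma x hx hs).symm
  have hf : (m.factorial : ℂ) ≠ 0 := by exact_mod_cast m.factorial_ne_zero
  have hsq : (-1 : ℂ) ^ m * (-1) ^ m = 1 := by rw [← mul_pow]; simp
  rw [hE.iteratedDeriv_eq m, iteratedDeriv_tsum_term (signedBinom_summable x hx) m p hp]
  change ∑' k : ℕ, signedBinom x k / (p + k) ^ (m + 1) = _
  field_simp
  rw [sq, hsq, mul_one]
end

section
/- Let p ∈ ℂ be not a nonpositive integer and let m ≥ 0 and n ≥ 0 be integers. Then ∑_{k=1}^∞ (-1)^n/(k·(p+n+k)^(m+1)·C(n+k,k)) = ∑_{k=0}^n (-1)^k·C(n,k)·(H_n − H_{n−k})/(p+k)^(m+1) − ((-1)^m/m!)·D_1, where D_1 is the complex derivative at x = n of the function x ↦ (the m-th complex derivative at s = p of s ↦ Γ(x+1)Γ(s)/Γ(x+s+1)). -/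
/-!
Write `B(x, s) = Γ(x+1)Γ(s)/Γ(x+s+1)`. For `Re s > 0` and `x > -1` this is `∫₀¹ t^(s-1) (1-t)^x dt`,
so formally `∂B/∂x (n, s) = ∫₀¹ t^(s-1) (1-t)^n log(1-t) dt = ∑ⱼ c(n, j)/(s+j)`, where `c(n, j)` is
the `j`-th Taylor coefficient of `(1-t)^n log(1-t)`. For `j ≤ n` it is
`(-1)^j C(n,j) (H_n - H_{n-j})`, and for `j = n+k`, `k ≥ 1`, it is `-(-1)^n/(k C(n+k,k))`.
Differentiating `m` times in `s` and splitting the series at `j = n` gives the identity.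

To cover every `s` that is not a nonpositive integer, the expansion is proved without integrals.

* `deriv_iteratedDeriv_comm`: since `B` is analytic near `(n, p)`, the derivative in `x` can be
  taken before the `m` derivatives in `s`.
* `mul_tsum_betaCoeff_zero`: for `n = 0` the expansion is the series
  `ψ(s+1) - ψ(1) = ∑ₖ (1/k - 1/(s+k))`. For real `s > 0` it follows from the functional equation
  of `ψ` and `ψ(x+N+1) - log N → 0` (log-convexity of `Γ`). The identity theorem extends it to all
  admissible `s`.
* `deriv_beta`: the contiguity relation `B(x+1, s) = B(x, s) - B(x, s+1)` matches
  `c(n+1, j+1) = c(n, j+1) - c(n, j)`, so the expansion follows for all `n` by induction.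
* `exists_ball_series`: as `c(n, j) = O(1/j)`, the series can be differentiated termwise.
-/

/-- The harmonic number `H_n = ∑_{k=1}^n 1/k` (as a complex number). -/
noncomputable def Hc (n : ℕ) : ℂ := ∑ i ∈ Finset.range n, (1 : ℂ) / (i + 1)

open Filter Topology

/-! ### Interchanging partial derivatives -/

lemma hasDerivAt_fst {F : ℂ × ℂ → ℂ} {x s : ℂ} (h : DifferentiableAt ℂ F (x, s)) :
    HasDerivAt (fun x => F (x, s)) (fderiv ℂ F (x, s) (1, 0)) x := by
  have h2 : HasDerivAt (fun x : ℂ => (x, s)) ((1 : ℂ), (0 : ℂ)) x :=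
    (hasDerivAt_id x).prodMk (hasDerivAt_const x s)
  exact HasFDerivAt.comp_hasDerivAt (f := fun x : ℂ => (x, s)) x h.hasFDerivAt h2

lemma hasDerivAt_snd {F : ℂ × ℂ → ℂ} {x s : ℂ} (h : DifferentiableAt ℂ F (x, s)) :
    HasDerivAt (fun s => F (x, s)) (fderiv ℂ F (x, s) (0, 1)) s := by
  have h2 : HasDerivAt (fun s : ℂ => (x, s)) ((0 : ℂ), (1 : ℂ)) s :=
    (hasDerivAt_const s x).prodMk (hasDerivAt_id s)
  exact HasFDerivAt.comp_hasDerivAt (f := fun s : ℂ => (x, s)) s h.hasFDerivAt h2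

/-- Symmetry of the second derivative of an analytic function of two variables. -/
lemma deriv_deriv_comm {F : ℂ × ℂ → ℂ} {x s : ℂ} (h : AnalyticAt ℂ F (x, s)) :
    deriv (fun y => deriv (fun t => F (y, t)) s) x =
      deriv (fun t => deriv (fun y => F (y, t)) x) s := by
  have hev := h.eventually_analyticAt
  have hd : DifferentiableAt ℂ (fderiv ℂ F) (x, s) := h.fderiv.differentiableAt
  have hx : Tendsto (fun y : ℂ => (y, s)) (𝓝 x) (𝓝 (x, s)) :=
    (Continuous.prodMk_left s).tendsto x
  have hs : Tendsto (fun t : ℂ => (x, t)) (𝓝 s) (𝓝 (x, s)) :=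
    (Continuous.prodMk_right x).tendsto s
  have e1 : (fun y => deriv (fun t => F (y, t)) s) =ᶠ[𝓝 x]
      fun y => fderiv ℂ F (y, s) (0, 1) :=
    (hx.eventually hev).mono fun y hy => (hasDerivAt_snd hy.differentiableAt).deriv
  have e2 : (fun t => deriv (fun y => F (y, t)) x) =ᶠ[𝓝 s]
      fun t => fderiv ℂ F (x, t) (1, 0) :=
    (hs.eventually hev).mono fun t ht => (hasDerivAt_fst ht.differentiableAt).deriv
  rw [e1.deriv_eq, e2.deriv_eq]
  have k (v : ℂ × ℂ) : DifferentiableAt ℂ (fun z => fderiv ℂ F z v) (x, s) :=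
    hd.clm_apply (differentiableAt_const v)
  have kf (v w : ℂ × ℂ) : fderiv ℂ (fun z => fderiv ℂ F z v) (x, s) w =
      fderiv ℂ (fderiv ℂ F) (x, s) w v := by
    rw [fderiv_clm_apply hd (differentiableAt_const v)]
    simp
  rw [(hasDerivAt_fst (k (0, 1))).deriv, (hasDerivAt_snd (k (1, 0))).deriv, kf, kf]
  have hsym : IsSymmSndFDerivAt ℂ F (x, s) :=
    (h.contDiffAt (n := minSmoothness ℂ 2)).isSymmSndFDerivAt le_rfl
  exact hsym.eq _ _

lemma deriv_iteratedDeriv_comm (m : ℕ) {F : ℂ × ℂ → ℂ} {x s : ℂ} (h : AnalyticAt ℂ F (x, s)) :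
    deriv (fun y => iteratedDeriv m (fun t => F (y, t)) s) x =
      iteratedDeriv m (fun t => deriv (fun y => F (y, t)) x) s := by
  induction m generalizing F with
  | zero => simp
  | succ m ih =>
    have hev := h.eventually_analyticAt
    have hs : Tendsto (fun t : ℂ => (x, t)) (𝓝 s) (𝓝 (x, s)) :=
      (Continuous.prodMk_right x).tendsto s
    have hF' : AnalyticAt ℂ (fun z : ℂ × ℂ => deriv (fun t => F (z.1, t)) z.2) (x, s) := by
      have h1 : AnalyticAt ℂ (fun z => fderiv ℂ F z (0, 1)) (x, s) :=
        ((ContinuousLinearMap.apply ℂ ℂ ((0, 1) : ℂ × ℂ)).analyticAt _).comp h.fderiv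
      exact h1.congr (hev.mono fun z hz => (hasDerivAt_snd hz.differentiableAt).deriv.symm)
    simp only [iteratedDeriv_succ']
    refine (ih hF').trans ?_
    refine Filter.EventuallyEq.iteratedDeriv_eq m ?_
    exact (hs.eventually hev).mono fun t ht => deriv_deriv_comm ht

/-! ### Termwise differentiation of partial fraction series -/

/-- Near a point off the nonpositive integers, `‖s + j‖` is bounded below by a multiple of `j + 1`,
uniformly in `s` and `j`. -/
lemma exists_ball_le_norm_add_nat {p : ℂ} (hp : ∀ j : ℕ, p ≠ -j) :
    ∃ r > 0, ∃ δ > 0, ∀ s ∈ Metric.ball p r, ∀ j : ℕ, δ * (j + 1 : ℝ) ≤ ‖s + j‖ := by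
  have hne (j : ℕ) : 0 < ‖p + j‖ := norm_pos_iff.2 fun h => hp j (eq_neg_of_add_eq_zero_left h)
  -- The ratios `(j + 1) / ‖p + j‖` are bounded because eventually `j + 1 ≤ 2 ‖p + j‖`.
  obtain ⟨C, hC⟩ : ∃ C : ℝ, ∀ j : ℕ, (j + 1 : ℝ) / ‖p + j‖ ≤ C := by
    have hb : IsBoundedUnder (· ≤ ·) atTop fun j : ℕ => (j + 1 : ℝ) / ‖p + j‖ := by
      refine ⟨2, ?_⟩
      rw [eventually_map]
      filter_upwards [eventually_ge_atTop (⌈2 * ‖p‖ + 1⌉₊)] with j hj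
      rw [Nat.ceil_le] at hj
      rw [div_le_iff₀ (hne j)]
      have h := norm_sub_norm_le (j : ℂ) (-p)
      rw [norm_neg, Complex.norm_natCast, sub_neg_eq_add, add_comm (j : ℂ) p] at h
      linarith
    obtain ⟨C, hC⟩ := hb.bddAbove_range
    exact ⟨C, fun j => hC ⟨j, rfl⟩⟩
  have hC0 : 0 < C := lt_of_lt_of_le (div_pos (by positivity) (hne 0)) (hC 0)
  refine ⟨1 / (2 * C), by positivity, 1 / (2 * C), by positivity, fun s hs j => ?_⟩
  have h1 : (j + 1 : ℝ) ≤ C * ‖p + j‖ := (div_le_iff₀ (hne j)).1 (hC j)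
  rw [Metric.mem_ball, dist_comm, dist_eq_norm] at hs
  have h2 : ‖p + j‖ ≤ ‖s + j‖ + ‖p - s‖ := by
    have := norm_add_le (s + j) (p - s)
    rwa [show s + j + (p - s) = p + j by ring] at this
  have h3 : C * ‖p - s‖ ≤ 1 / 2 := by
    calc C * ‖p - s‖ ≤ C * (1 / (2 * C)) := by gcongr
      _ = 1 / 2 := by field_simp
  have h4 : (j + 1 : ℝ) ≤ C * ‖s + j‖ + 1 / 2 := by nlinarith
  rw [div_mul_eq_mul_div, div_le_iff₀ (by positivity)]
  have : (0 : ℝ) ≤ j := j.cast_nonneg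
  linarith

lemma add_nat_ne_zero {s : ℂ} (hs : ∀ j : ℕ, s ≠ -j) (j : ℕ) : s + j ≠ 0 :=
  fun h => hs j (eq_neg_of_add_eq_zero_left h)

/-- If `c j = O(1/j)`, the series `∑ⱼ c j / (s + j)` is holomorphic off the nonpositive integers and may
be differentiated termwise any number of times. The radius of the ball does not depend on the order `m`. -/
lemma exists_ball_series {c : ℕ → ℂ} {B : ℝ} (hc : ∀ j : ℕ, ‖c j‖ ≤ B / (j + 1))
    {p : ℂ} (hp : ∀ j : ℕ, p ≠ -j) :
    ∃ r > 0, ∀ m : ℕ,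
      (∀ s ∈ Metric.ball p r,
        HasSum (fun j : ℕ => c j * ((-1) ^ m * m.factorial / (s + j) ^ (m + 1)))
          (iteratedDeriv m (fun s => ∑' j : ℕ, c j / (s + j)) s)) ∧
      DifferentiableOn ℂ (iteratedDeriv m (fun s => ∑' j : ℕ, c j / (s + j)))
        (Metric.ball p r) := by
  obtain ⟨r, hr, δ, hδ, hball⟩ := exists_ball_le_norm_add_nat hp
  have hne : ∀ s ∈ Metric.ball p r, ∀ j : ℕ, s + j ≠ 0 := fun s hs j =>
    norm_pos_iff.1 (lt_of_lt_of_le (by positivity) (hball s hs j))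
  have hB : 0 ≤ B := by simpa using (norm_nonneg _).trans (hc 0)
  let f (m j : ℕ) (s : ℂ) : ℂ := c j * ((-1) ^ m * m.factorial / (s + j) ^ (m + 1))
  let u (m j : ℕ) : ℝ := (B * m.factorial / δ ^ (m + 1)) * (1 / (j + 1 : ℝ) ^ 2)
  have hu (m : ℕ) : Summable (u m) := by
    refine Summable.mul_left _ ?_
    exact_mod_cast (summable_nat_add_iff 1).2 (Real.summable_one_div_nat_pow.2 one_lt_two)
  have hfu (m j : ℕ) (s : ℂ) (hs : s ∈ Metric.ball p r) : ‖f m j s‖ ≤ u m j := by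
    have h1 : (δ * (j + 1 : ℝ)) ^ (m + 1) ≤ ‖s + j‖ ^ (m + 1) := by
      gcongr; exact hball s hs j
    have h2 : δ ^ (m + 1) * (j + 1 : ℝ) ≤ ‖s + j‖ ^ (m + 1) := by
      refine le_trans ?_ h1
      rw [mul_pow]
      gcongr
      exact le_self_pow₀ (by simp) (by simp)
    calc ‖f m j s‖ = ‖c j‖ * (m.factorial / ‖s + j‖ ^ (m + 1)) := by simp [f]
      _ ≤ B / (j + 1) * (m.factorial / (δ ^ (m + 1) * (j + 1 : ℝ))) := by
          gcongr; exact hc j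
      _ = u m j := by simp only [u]; field_simp
  have hderiv (m j : ℕ) (s : ℂ) (hs : s ∈ Metric.ball p r) :
      HasDerivAt (f m j) (f (m + 1) j s) s := by
    have h0 := hne s hs j
    have h1 : HasDerivAt (fun s : ℂ => (s + j) ^ (m + 1)) ((m + 1 : ℕ) * (s + j) ^ m * 1) s :=
      ((hasDerivAt_id s).add_const (j : ℂ)).pow (m + 1)
    have h2 := ((h1.inv (pow_ne_zero _ h0)).const_mul ((-1 : ℂ) ^ m * m.factorial)).const_mul (c j)
    refine h2.congr_deriv ?_
    simp only [f, Nat.factorial_succ]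
    push_cast
    field_simp
    ring
  have hdiff (m j : ℕ) : DifferentiableOn ℂ (f m j) (Metric.ball p r) := fun s hs =>
    (hderiv m j s hs).differentiableAt.differentiableWithinAt
  have heq (m : ℕ) : ∀ s ∈ Metric.ball p r,
      iteratedDeriv m (fun s => ∑' j : ℕ, c j / (s + j)) s = ∑' j, f m j s := by
    induction m with
    | zero => intro s hs; simp [f, div_eq_mul_inv]
    | succ m ih =>
      intro s hs
      have he : iteratedDeriv m (fun s => ∑' j : ℕ, c j / (s + j)) =ᶠ[𝓝 s]
          fun s => ∑' j, f m j s :=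
        (Metric.isOpen_ball.eventually_mem hs).mono ih
      rw [iteratedDeriv_succ, he.deriv_eq]
      rw [← (Complex.hasSum_deriv_of_summable_norm (hu m) (hdiff m) Metric.isOpen_ball
        (hfu m) hs).tsum_eq]
      exact tsum_congr fun j => (hderiv m j s hs).deriv
  refine ⟨r, hr, fun m => ⟨fun s hs => ?_, ?_⟩⟩
  · rw [heq m s hs]
    exact (Summable.of_norm_bounded (hu m) fun j => hfu m j s hs).hasSum
  · exact (Complex.differentiableOn_tsum_of_summable_norm (hu m) (hdiff m) Metric.isOpen_ball
      (hfu m)).congr (heq m)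

/-! ### The digamma function on the positive reals -/

lemma digamma_ofReal {x : ℝ} (hx : 0 < x) :
    Complex.digamma x = (deriv (Real.log ∘ Real.Gamma) x : ℝ) := by
  have hne (m : ℕ) : x ≠ -m := by have : (0 : ℝ) ≤ m := m.cast_nonneg; linarith
  have hne' (m : ℕ) : (x : ℂ) ≠ -m := by exact_mod_cast hne m
  have h1 := (Complex.differentiableAt_Gamma x hne').hasDerivAt.comp_ofReal
  have h2 := (Real.differentiableAt_Gamma hne).hasDerivAt.ofReal_comp
  simp only [Complex.Gamma_ofReal] at h1
  rw [Complex.digamma_def, logDeriv_apply, h1.unique h2, Function.comp_def,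
    deriv.log (Real.differentiableAt_Gamma hne) (Real.Gamma_pos_of_pos hx).ne',
    Complex.Gamma_ofReal]
  push_cast; rfl

/-- Log-convexity of `Γ` squeezes the derivative of `log Γ` at `x + N + 1` between `log (x + N)` and
`log (x + N + 1)`. -/
lemma tendsto_deriv_log_Gamma_sub {x : ℝ} (hx : 0 ≤ x) :
    Tendsto (fun N : ℕ => deriv (Real.log ∘ Real.Gamma) (x + N + 1) - Real.log N)
      atTop (𝓝 0) := by
  let f := Real.log ∘ Real.Gamma
  have hc : ConvexOn ℝ (Set.Ioi 0) f := Real.convexOn_log_Gamma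
  have h_rec (x : ℝ) (hx : 0 < x) : f (x + 1) = f x + Real.log x := by
    simp only [f, Function.comp_apply, Real.Gamma_add_one hx.ne',
      Real.log_mul hx.ne' (Real.Gamma_pos_of_pos hx).ne', add_comm]
  have hder {x : ℝ} (hx : 0 < x) : DifferentiableAt ℝ f x := by
    refine ((Real.differentiableAt_Gamma ?_).log (Real.Gamma_ne_zero ?_)) <;>
    exact fun m ↦ ne_of_gt (by have : (0 : ℝ) ≤ m := m.cast_nonneg; linarith)
  have hLB (y : ℝ) (hy : 0 < y) : Real.log y ≤ deriv f (y + 1) := by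
    refine (le_of_eq ?_).trans <| hc.slope_le_deriv (x := y) (y := y + 1) hy
      (by simp only [Set.mem_Ioi]; linarith) (by linarith) (hder (by linarith))
    rw [slope_def_field, h_rec y hy]; simp
  have hUB (y : ℝ) (hy : 0 < y) : deriv f y ≤ Real.log y := by
    refine (hc.deriv_le_slope (x := y) (y := y + 1) hy
      (by simp only [Set.mem_Ioi]; linarith) (by linarith) (hder hy)).trans (le_of_eq ?_)
    rw [slope_def_field, h_rec y hy]; simp
  have hlog (c : ℝ) : Tendsto (fun N : ℕ => Real.log (c + N) - Real.log N) atTop (𝓝 0) := by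
    have := (Real.tendsto_log_comp_add_sub_log c).comp tendsto_natCast_atTop_atTop
    simpa [Function.comp_def, add_comm] using this
  refine tendsto_of_tendsto_of_tendsto_of_le_of_le' (hlog x) (hlog (x + 1)) ?_ ?_
  · filter_upwards [eventually_gt_atTop 0] with N hN
    have : (0 : ℝ) < N := by exact_mod_cast hN
    exact sub_le_sub_right (hLB (x + N) (by linarith)) _
  · filter_upwards [eventually_gt_atTop 0] with N hN
    have : (0 : ℝ) < N := by exact_mod_cast hN
    have := hUB (x + N + 1) (by linarith)
    rw [show x + 1 + (N : ℝ) = x + N + 1 by ring]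
    exact sub_le_sub_right this _

lemma digamma_add_nat {s : ℂ} (hs : ∀ j : ℕ, s ≠ -j) (N : ℕ) :
    Complex.digamma (s + N) = Complex.digamma s + ∑ k ∈ Finset.range N, (s + k)⁻¹ := by
  induction N with
  | zero => simp
  | succ N ih =>
    rw [Finset.sum_range_succ, ← add_assoc, ← ih, Nat.cast_succ, ← add_assoc]
    refine Complex.digamma_apply_add_one _ fun m h => hs (m + N) ?_
    push_cast
    linear_combination h

/-- The functional equation turns the `N`-th partial sum into
`(ψ(N + 1) - ψ(1)) - (ψ(x + N + 1) - ψ(x + 1))`, in which the terms with `N` cancel in the limit. -/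
lemma tendsto_digamma_real {x : ℝ} (hx : 0 ≤ x) :
    Tendsto (fun N : ℕ => ∑ k ∈ Finset.range N, (((k : ℂ) + 1)⁻¹ - ((x : ℂ) + 1 + k)⁻¹))
      atTop (𝓝 (Complex.digamma (x + 1) - Complex.digamma 1)) := by
  have h := ((tendsto_deriv_log_Gamma_sub le_rfl).sub (tendsto_deriv_log_Gamma_sub hx))
  have h2 := ((Complex.continuous_ofReal.tendsto _).comp h).add_const
    (Complex.digamma (x + 1) - Complex.digamma 1)
  simp only [sub_zero, Complex.ofReal_zero, zero_add] at h2
  refine h2.congr fun N => ?_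
  have hN : (0 : ℝ) ≤ N := N.cast_nonneg
  have e1 := digamma_ofReal (x := N + 1) (by linarith)
  have e2 := digamma_ofReal (x := x + N + 1) (by linarith)
  have a1 := digamma_add_nat (s := 1) (fun j h => by
    have := congrArg Complex.re h; simp at this
    have : (0 : ℝ) ≤ j := j.cast_nonneg
    linarith) N
  have a2 := digamma_add_nat (s := x + 1) (fun j h => by
    have := congrArg Complex.re h; simp at this
    have : (0 : ℝ) ≤ j := j.cast_nonneg
    linarith) N
  push_cast at e1 e2
  rw [show (x : ℂ) + N + 1 = x + 1 + N by ring, a2] at e2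
  rw [show (N : ℂ) + 1 = 1 + N by ring, a1] at e1
  simp only [Function.comp_apply, Finset.sum_sub_distrib]
  push_cast
  simp only [add_comm (_ : ℂ) 1] at *
  linear_combination -e1 + e2

/-! ### Taylor coefficients of `(1-t)^n log(1-t)` -/

/-- The `j`-th Taylor coefficient at `t = 0` of `(1 - t)^n log (1 - t)`, equivalently the derivative
at `x = n` of `(-1)^j C(x, j)`. -/
noncomputable def betaCoeff (n j : ℕ) : ℂ :=
  if j ≤ n then (-1) ^ j * (Nat.choose n j : ℂ) * (Hc n - Hc (n - j))
  else -(-1) ^ n / (((j : ℂ) - n) * (Nat.choose j n : ℂ))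

lemma betaCoeff_zero_right (n : ℕ) : betaCoeff n 0 = 0 := by simp [betaCoeff]

lemma betaCoeff_zero_succ (j : ℕ) : betaCoeff 0 (j + 1) = -((j : ℂ) + 1)⁻¹ := by
  simp [betaCoeff, neg_div]

lemma betaCoeff_add (n k : ℕ) :
    betaCoeff n (n + (k + 1)) =
      -((-1) ^ n / (((k : ℂ) + 1) * (Nat.choose (n + (k + 1)) (k + 1) : ℂ))) := by
  rw [betaCoeff, if_neg (by omega), Nat.choose_symm_add, ← neg_div]
  push_cast
  ring_nf

lemma Hc_succ (n : ℕ) : Hc (n + 1) = Hc n + 1 / (n + 1) := by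
  simp [Hc, Finset.sum_range_succ]

/-- The recursion expressing `(1 - t)^(n+1) log (1 - t) = (1 - t) · (1 - t)^n log (1 - t)`. -/
lemma betaCoeff_succ_succ (n j : ℕ) :
    betaCoeff (n + 1) (j + 1) = betaCoeff n (j + 1) - betaCoeff n j := by
  have hn : (n : ℂ) + 1 ≠ 0 := by exact_mod_cast n.succ_ne_zero
  have hj : (j : ℂ) + 1 ≠ 0 := by exact_mod_cast j.succ_ne_zero
  rcases lt_trichotomy j n with h | h | h
  · obtain ⟨d, rfl⟩ : ∃ d, n = j + 1 + d := ⟨n - (j + 1), by omega⟩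
    rw [betaCoeff, betaCoeff, betaCoeff, if_pos (by omega), if_pos (by omega), if_pos (by omega)]
    rw [show j + 1 + d + 1 - (j + 1) = d + 1 by omega, show j + 1 + d - (j + 1) = d by omega,
      show j + 1 + d - j = d + 1 by omega, Nat.choose_succ_succ' (j + 1 + d) j, Hc_succ, Hc_succ]
    have hd : (d : ℂ) + 1 ≠ 0 := by exact_mod_cast d.succ_ne_zero
    have e := Nat.choose_succ_right_eq (j + 1 + d) j
    rw [show j + 1 + d - j = d + 1 by omega] at e
    have e' : ((j + 1 + d).choose (j + 1) : ℂ) = (j + 1 + d).choose j * (d + 1) / (j + 1) := by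
      rw [eq_div_iff hj]; exact_mod_cast e
    push_cast at hn ⊢
    rw [e']
    field_simp
    ring
  · subst h
    rw [betaCoeff, betaCoeff, betaCoeff, if_pos le_rfl, if_neg (by omega), if_pos le_rfl]
    simp [Hc, Finset.sum_range_succ]
    field_simp
    ring
  · obtain ⟨d, rfl⟩ : ∃ d, j = n + 1 + d := ⟨j - (n + 1), by omega⟩
    rw [betaCoeff, betaCoeff, betaCoeff, if_neg (by omega), if_neg (by omega), if_neg (by omega)]
    have hd : (d : ℂ) + 1 ≠ 0 := by exact_mod_cast d.succ_ne_zero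
    have hd2 : (d : ℂ) + 2 ≠ 0 := by exact_mod_cast (d + 1).succ_ne_zero
    -- The other binomials are rational multiples of `C(n + 1 + d, n)`.
    have e1 := Nat.choose_succ_right_eq (n + 1 + d) n
    rw [show n + 1 + d - n = d + 1 by omega] at e1
    have e1' : ((n + 1 + d).choose (n + 1) : ℂ) = (n + 1 + d).choose n * (d + 1) / (n + 1) := by
      rw [eq_div_iff hn]; exact_mod_cast e1
    have e2 := Nat.choose_succ_right_eq (n + 1 + d + 1) n
    rw [show n + 1 + d + 1 - n = d + 2 by omega, Nat.choose_succ_succ'] at e2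
    have e2' : ((n + 1 + d + 1).choose n : ℂ) =
        ((n + 1 + d).choose n + (n + 1 + d).choose (n + 1)) * (n + 1) / (d + 2) := by
      rw [eq_div_iff hd2]; exact_mod_cast e2.symm
    have hC : ((n + 1 + d).choose n : ℂ) ≠ 0 := by
      exact_mod_cast (Nat.choose_pos (by omega : n ≤ n + 1 + d)).ne'
    have hs : (n : ℂ) + d + 2 ≠ 0 := by exact_mod_cast (n + d + 1).succ_ne_zero
    have e3 : ((n + 1 + d + 1).choose (n + 1) : ℂ) =
        (n + 1 + d).choose n + (n + 1 + d).choose (n + 1) := by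
      exact_mod_cast Nat.choose_succ_succ' (n + 1 + d) n
    rw [e3, e2', e1']
    have f1 : ((n + 1 + d).choose n : ℂ) + (n + 1 + d).choose n * (d + 1) / (n + 1) =
        (n + 1 + d).choose n * (n + d + 2) / (n + 1) := by field_simp; ring
    rw [f1]
    push_cast
    rw [show (n : ℂ) + 1 + d + 1 - (n + 1) = d + 1 by ring,
      show (n : ℂ) + 1 + d + 1 - n = d + 2 by ring, show (n : ℂ) + 1 + d - n = d + 1 by ring]
    field_simp
    ring

lemma exists_norm_betaCoeff_le (n : ℕ) : ∃ B : ℝ, ∀ j : ℕ, ‖betaCoeff n j‖ ≤ B / (j + 1) := by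
  induction n with
  | zero =>
    refine ⟨2, fun j => ?_⟩
    cases j with
    | zero => simp [betaCoeff_zero_right]
    | succ j =>
      rw [betaCoeff_zero_succ, norm_neg, norm_inv, ← Nat.cast_add_one, Complex.norm_natCast,
        inv_eq_one_div]
      push_cast
      rw [div_le_div_iff₀ (by positivity) (by positivity)]
      have : (0 : ℝ) ≤ j := j.cast_nonneg
      linarith
  | succ n ih =>
    obtain ⟨B, hB⟩ := ih
    have hB0 : 0 ≤ B := by simpa using (norm_nonneg _).trans (hB 0)
    refine ⟨3 * B, fun j => ?_⟩
    cases j with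
    | zero => simpa [betaCoeff_zero_right] using hB0
    | succ j =>
      rw [betaCoeff_succ_succ]
      refine (norm_sub_le _ _).trans ((add_le_add (hB _) (hB _)).trans ?_)
      have : B / (j + 1 : ℝ) ≤ 2 * B / (j + 1 + 1) := by
        rw [div_le_div_iff₀ (by positivity) (by positivity)]
        have : (0 : ℝ) ≤ B * j := by positivity
        linarith
      push_cast
      calc _ ≤ B / (j + 1 + 1 : ℝ) + 2 * B / (j + 1 + 1) := by gcongr
        _ = _ := by ring

/-! ### The digamma series off the nonpositive integers -/

lemma isOpen_nonpole : IsOpen {s : ℂ | ∀ j : ℕ, s ≠ -j} := by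
  rw [Metric.isOpen_iff]
  intro p hp
  obtain ⟨r, hr, δ, hδ, h⟩ := exists_ball_le_norm_add_nat hp
  refine ⟨r, hr, fun s hs j hj => ?_⟩
  have h1 := h s hs j
  rw [hj, neg_add_cancel, norm_zero] at h1
  have : 0 < δ * (j + 1 : ℝ) := by positivity
  linarith

/-- The complement of a countable set in the plane is connected. -/
lemma isPreconnected_nonpole : IsPreconnected {s : ℂ | ∀ j : ℕ, s ≠ -j} := by
  have h : {s : ℂ | ∀ j : ℕ, s ≠ -j} = (Set.range fun j : ℕ => -(j : ℂ))ᶜ := by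
    ext s; simp [eq_comm]
  rw [h]
  refine (Set.Countable.isPathConnected_compl_of_one_lt_rank ?_
    (Set.countable_range _)).isConnected.isPreconnected
  rw [Complex.rank_real_complex]; norm_num

lemma analyticAt_Gamma {s : ℂ} (hs : ∀ j : ℕ, s ≠ -j) : AnalyticAt ℂ Complex.Gamma s :=
  DifferentiableOn.analyticAt (s := {s : ℂ | ∀ j : ℕ, s ≠ -j})
    (fun t ht => (Complex.differentiableAt_Gamma t ht).differentiableWithinAt)
    (isOpen_nonpole.mem_nhds hs)

lemma nonpole_add_nat {s : ℂ} (hs : ∀ j : ℕ, s ≠ -j) (m j : ℕ) : s + m ≠ -j := fun h =>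
  hs (m + j) (by push_cast; linear_combination h)

lemma nonpole_add_one {s : ℂ} (hs : ∀ j : ℕ, s ≠ -j) (j : ℕ) : s + 1 ≠ -j := by
  simpa using nonpole_add_nat hs 1 j

lemma nonpole_nat_succ (n j : ℕ) : (n : ℂ) + 1 ≠ -j := fun h =>
  (by omega : n + 1 + j ≠ 0) (by exact_mod_cast (by linear_combination h : (n : ℂ) + 1 + j = 0))

lemma analyticAt_digamma {s : ℂ} (hs : ∀ j : ℕ, s ≠ -j) : AnalyticAt ℂ Complex.digamma s :=
  (analyticAt_Gamma hs).deriv.div (analyticAt_Gamma hs) (Complex.Gamma_ne_zero hs)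

lemma summable_betaCoeff (n : ℕ) {s : ℂ} (hs : ∀ j : ℕ, s ≠ -j) :
    Summable fun j : ℕ => betaCoeff n j / (s + j) := by
  obtain ⟨B, hB⟩ := exists_norm_betaCoeff_le n
  obtain ⟨r, hr, h⟩ := exists_ball_series hB hs
  simpa [div_eq_mul_inv] using ((h 0).1 s (Metric.mem_ball_self hr)).summable

lemma analyticAt_betaSeries (n : ℕ) {s : ℂ} (hs : ∀ j : ℕ, s ≠ -j) :
    AnalyticAt ℂ (fun s => ∑' j : ℕ, betaCoeff n j / (s + j)) s := by
  obtain ⟨B, hB⟩ := exists_norm_betaCoeff_le n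
  obtain ⟨r, hr, h⟩ := exists_ball_series hB hs
  simpa using (h 0).2.analyticAt (Metric.ball_mem_nhds s hr)

lemma mul_tsum_betaCoeff_zero_real {x : ℝ} (hx : 0 < x) :
    (x : ℂ) * ∑' j : ℕ, betaCoeff 0 j / (x + j) =
      Complex.digamma 1 - Complex.digamma (x + 1) := by
  have hne (j : ℕ) : (x : ℂ) ≠ -j := by
    have : (0 : ℝ) ≤ j := j.cast_nonneg
    exact_mod_cast (by linarith : x ≠ -j)
  have h1 := ((summable_betaCoeff 0 hne).hasSum.mul_left (x : ℂ)).tendsto_sum_nat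
  have h2 := (tendsto_digamma_real hx.le).neg
  rw [neg_sub] at h2
  refine tendsto_nhds_unique ((tendsto_add_atTop_iff_nat 1).2 h1) (h2.congr fun N => ?_)
  rw [Finset.sum_range_succ', betaCoeff_zero_right, zero_div, mul_zero, add_zero,
    ← Finset.sum_neg_distrib]
  refine Finset.sum_congr rfl fun k _ => ?_
  have hk : (k : ℂ) + 1 ≠ 0 := by exact_mod_cast k.succ_ne_zero
  have hk' : (x : ℂ) + 1 + k ≠ 0 := by
    have := add_nat_ne_zero hne (k + 1)
    push_cast at this
    rwa [add_assoc, add_comm (1 : ℂ)]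
  rw [betaCoeff_zero_succ]
  push_cast
  rw [show (x : ℂ) + (k + 1) = x + 1 + k by ring]
  field_simp
  ring

/-- The digamma series `ψ(1) - ψ(s + 1) = -∑ₖ s / (k (s + k))`, extended from the positive reals by the
identity theorem. -/
lemma mul_tsum_betaCoeff_zero {s : ℂ} (hs : ∀ j : ℕ, s ≠ -j) :
    s * ∑' j : ℕ, betaCoeff 0 j / (s + j) = Complex.digamma 1 - Complex.digamma (s + 1) := by
  have h1 : ∀ j : ℕ, (1 : ℂ) ≠ -j := by simpa using nonpole_nat_succ 0
  refine AnalyticOnNhd.eqOn_of_preconnected_of_frequently_eq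
    (f := fun s : ℂ => s * ∑' j : ℕ, betaCoeff 0 j / (s + j))
    (g := fun s : ℂ => Complex.digamma 1 - Complex.digamma (s + 1))
    (fun t ht => analyticAt_id.mul (analyticAt_betaSeries 0 ht))
    (fun t ht => analyticAt_const.sub ?_) isPreconnected_nonpole h1 ?_ hs
  · exact (analyticAt_digamma (nonpole_add_one ht)).fun_comp (f := fun t : ℂ => t + 1)
      (analyticAt_id.add analyticAt_const)
  · have ht : Tendsto (fun x : ℝ => (x : ℂ)) (𝓝[≠] 1) (𝓝[≠] 1) := by
      refine tendsto_nhdsWithin_iff.2 ⟨?_, ?_⟩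
      · exact (by simpa using Complex.continuous_ofReal.tendsto 1 :
          Tendsto (fun x : ℝ => (x : ℂ)) (𝓝 1) (𝓝 1)).mono_left nhdsWithin_le_nhds
      · filter_upwards [self_mem_nhdsWithin] with x hx
        simpa using hx
    refine ht.frequently (Eventually.frequently ?_)
    filter_upwards [nhdsWithin_le_nhds (lt_mem_nhds one_pos)] with x hx
    exact mul_tsum_betaCoeff_zero_real hx

/-! ### The derivative in `x` of the Beta quotient -/

lemma analyticAt_beta (n : ℕ) {s : ℂ} (hs : ∀ j : ℕ, s ≠ -j) :
    AnalyticAt ℂ (fun z : ℂ × ℂ =>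
      Complex.Gamma (z.1 + 1) * Complex.Gamma z.2 / Complex.Gamma (z.1 + z.2 + 1)) (n, s) := by
  have h1 : AnalyticAt ℂ (fun z : ℂ × ℂ => Complex.Gamma (z.1 + 1)) (n, s) :=
    (analyticAt_Gamma (nonpole_nat_succ n)).comp_of_eq (analyticAt_fst.add analyticAt_const) rfl
  have h2 : AnalyticAt ℂ (fun z : ℂ × ℂ => Complex.Gamma z.2) (n, s) :=
    (analyticAt_Gamma hs).comp_of_eq analyticAt_snd rfl
  have hs' : ∀ j : ℕ, (n : ℂ) + s + 1 ≠ -j := by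
    simpa [add_comm (n : ℂ)] using nonpole_add_one (nonpole_add_nat hs n)
  have h3 : AnalyticAt ℂ (fun z : ℂ × ℂ => Complex.Gamma (z.1 + z.2 + 1)) (n, s) :=
    (analyticAt_Gamma hs').comp_of_eq
      ((analyticAt_fst.add analyticAt_snd).add analyticAt_const) rfl
  exact (h1.mul h2).div h3 (Complex.Gamma_ne_zero hs')

/-- The contiguity relation `B(x + 1, s) = B(x, s) - B(x, s + 1)`. It also holds when `x + s + 1` is a
pole of `Γ`, since then the junk value `Γ = 0` makes `1 / Γ` agree with the entire reciprocal. -/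
lemma beta_add_one {x s : ℂ} (hx : x + 1 ≠ 0) (hs : s ≠ 0) :
    Complex.Gamma (x + 1 + 1) * Complex.Gamma s / Complex.Gamma (x + 1 + s + 1) =
      Complex.Gamma (x + 1) * Complex.Gamma s / Complex.Gamma (x + s + 1) -
        Complex.Gamma (x + 1) * Complex.Gamma (s + 1) / Complex.Gamma (x + (s + 1) + 1) := by
  simp only [div_eq_mul_inv]
  rw [Complex.one_div_Gamma_eq_self_mul_one_div_Gamma_add_one (x + s + 1),
    Complex.Gamma_add_one _ hx, Complex.Gamma_add_one _ hs,
    show x + 1 + s + 1 = x + s + 1 + 1 by ring, show x + (s + 1) + 1 = x + s + 1 + 1 by ring]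
  ring

lemma deriv_beta_zero {s : ℂ} (hs : ∀ j : ℕ, s ≠ -j) :
    deriv (fun x : ℂ => Complex.Gamma (x + 1) * Complex.Gamma s / Complex.Gamma (x + s + 1)) 0 =
      ∑' j : ℕ, betaCoeff 0 j / (s + j) := by
  have hs0 : s ≠ 0 := by simpa using hs 0
  have h1 : ∀ j : ℕ, (1 : ℂ) ≠ -j := by simpa using nonpole_nat_succ 0
  have hg := Complex.Gamma_ne_zero (nonpole_add_one hs)
  have d1 : HasDerivAt (fun x : ℂ => Complex.Gamma (x + 1)) (deriv Complex.Gamma 1) 0 := by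
    refine HasDerivAt.comp_add_const (f := Complex.Gamma) 0 1 ?_
    rw [zero_add]
    exact (Complex.differentiableAt_Gamma 1 h1).hasDerivAt
  have d2 : HasDerivAt (fun x : ℂ => Complex.Gamma (x + s + 1))
      (deriv Complex.Gamma (s + 1)) 0 := by
    simp only [add_assoc]
    refine HasDerivAt.comp_add_const (f := Complex.Gamma) 0 (s + 1) ?_
    rw [zero_add]
    exact (Complex.differentiableAt_Gamma _ (nonpole_add_one hs)).hasDerivAt
  have d := ((d1.mul_const (Complex.Gamma s)).div d2 (by simpa using hg)).deriv
  refine d.trans ?_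
  apply mul_left_cancel₀ hs0
  rw [mul_tsum_betaCoeff_zero hs, Complex.digamma_def, logDeriv_apply, logDeriv_apply]
  simp only [zero_add, Complex.Gamma_one, one_mul, div_one]
  rw [Complex.Gamma_add_one s hs0] at hg ⊢
  have hg' := right_ne_zero_of_mul hg
  field_simp

/-- The expansion of `∂B/∂x` at `x = n`, for all `s` that are not nonpositive integers. -/
lemma deriv_beta (n : ℕ) {s : ℂ} (hs : ∀ j : ℕ, s ≠ -j) :
    deriv (fun x : ℂ => Complex.Gamma (x + 1) * Complex.Gamma s / Complex.Gamma (x + s + 1)) n =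
      ∑' j : ℕ, betaCoeff n j / (s + j) := by
  induction n generalizing s with
  | zero => simpa using deriv_beta_zero hs
  | succ n ih =>
    have hs1 := nonpole_add_one hs
    have hd {t : ℂ} (ht : ∀ j : ℕ, t ≠ -j) : DifferentiableAt ℂ
        (fun x : ℂ => Complex.Gamma (x + 1) * Complex.Gamma t / Complex.Gamma (x + t + 1)) n :=
      (hasDerivAt_fst (analyticAt_beta n ht).differentiableAt).differentiableAt
    have he : (fun x : ℂ => Complex.Gamma (x + 1 + 1) * Complex.Gamma s /
          Complex.Gamma (x + 1 + s + 1)) =ᶠ[𝓝 (n : ℂ)]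
        (fun x : ℂ => Complex.Gamma (x + 1) * Complex.Gamma s / Complex.Gamma (x + s + 1)) -
        fun x : ℂ =>
          Complex.Gamma (x + 1) * Complex.Gamma (s + 1) / Complex.Gamma (x + (s + 1) + 1) := by
      have hc : ∀ᶠ x : ℂ in 𝓝 (n : ℂ), x + 1 ≠ 0 :=
        (by fun_prop : ContinuousAt (fun x : ℂ => x + 1) (n : ℂ)).eventually_ne
          (by exact_mod_cast n.succ_ne_zero)
      filter_upwards [hc] with x hx
      exact beta_add_one hx (by simpa using hs 0)
    have hshift := deriv_comp_add_const (fun x : ℂ =>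
      Complex.Gamma (x + 1) * Complex.Gamma s / Complex.Gamma (x + s + 1)) 1 (n : ℂ)
    rw [Nat.cast_succ, ← hshift, he.deriv_eq, deriv_sub (hd hs) (hd hs1), ih hs, ih hs1]
    have a1 := summable_betaCoeff n hs
    have a2 := summable_betaCoeff n hs1
    have a3 := summable_betaCoeff (n + 1) hs
    rw [← a1.sum_add_tsum_nat_add 1, ← a3.sum_add_tsum_nat_add 1]
    simp only [Finset.sum_range_one, betaCoeff_zero_right, zero_div, zero_add]
    rw [← ((summable_nat_add_iff 1).2 a1).tsum_sub a2]
    refine tsum_congr fun j => ?_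
    rw [betaCoeff_succ_succ]
    push_cast
    rw [show s + 1 + (j : ℂ) = s + (j + 1) by ring, sub_div]

/-- For `p ∈ ℂ` not a nonpositive integer and integers `m, n ≥ 0`,
`∑_{k=1}^∞ (-1)^n/(k·(p+n+k)^(m+1)·C(n+k,k))
  = ∑_{k=0}^n (-1)^k·C(n,k)·(H_n − H_{n−k})/(p+k)^(m+1) − ((-1)^m/m!)·D₁`,
where `D₁ = ∂/∂x [∂^m/∂s^m Γ(x+1)Γ(s)/Γ(x+s+1)]` at `x = n`, `s = p`. -/
theorem sum_inv_k_binom_eq (p : ℂ) (hp : ∀ j : ℕ, p ≠ -j) (m n : ℕ) :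
    (∑' k : ℕ,
        (-1 : ℂ) ^ n /
          ((k + 1 : ℂ) * (p + n + (k + 1)) ^ (m + 1) *
            (Nat.choose (n + (k + 1)) (k + 1) : ℂ))) =
      (∑ k ∈ Finset.range (n + 1),
        (-1 : ℂ) ^ k * (Nat.choose n k : ℂ) * (Hc n - Hc (n - k)) / (p + k) ^ (m + 1)) -
      (-1 : ℂ) ^ m / Nat.factorial m *
        deriv
          (fun x : ℂ =>
            iteratedDeriv m
              (fun s : ℂ =>
                Complex.Gamma (x + 1) * Complex.Gamma s / Complex.Gamma (x + s + 1))
              p)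
          (n : ℂ) := by
  obtain ⟨B, hB⟩ := exists_norm_betaCoeff_le n
  obtain ⟨r, hr, h⟩ := exists_ball_series hB hp
  have hD : deriv (fun x : ℂ => iteratedDeriv m (fun s : ℂ =>
        Complex.Gamma (x + 1) * Complex.Gamma s / Complex.Gamma (x + s + 1)) p) (n : ℂ) =
      iteratedDeriv m (fun s => ∑' j : ℕ, betaCoeff n j / (s + j)) p := by
    refine (deriv_iteratedDeriv_comm m (analyticAt_beta n hp)).trans ?_
    refine Filter.EventuallyEq.iteratedDeriv_eq m ?_
    filter_upwards [isOpen_nonpole.mem_nhds hp] with s hs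
    exact deriv_beta n hs
  have hsum := ((h m).1 p (Metric.mem_ball_self hr)).mul_left ((-1 : ℂ) ^ m / m.factorial)
  have hf : (m.factorial : ℂ) ≠ 0 := by exact_mod_cast m.factorial_ne_zero
  have hsign : (-1 : ℂ) ^ m * (-1) ^ m = 1 := by rw [← mul_pow]; simp
  have hsum' : HasSum (fun j : ℕ => betaCoeff n j / (p + j) ^ (m + 1))
      ((-1 : ℂ) ^ m / m.factorial *
        iteratedDeriv m (fun s => ∑' j : ℕ, betaCoeff n j / (s + j)) p) := by
    have hfun : (fun j : ℕ => betaCoeff n j / (p + j) ^ (m + 1)) = fun j : ℕ =>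
        (-1 : ℂ) ^ m / m.factorial *
          (betaCoeff n j * ((-1) ^ m * m.factorial / (p + j) ^ (m + 1))) := by
      funext j
      have hpj := add_nat_ne_zero hp j
      field_simp
      linear_combination (-betaCoeff n j) * hsign
    rw [hfun]
    exact hsum
  rw [hD, ← hsum'.tsum_eq, ← hsum'.summable.sum_add_tsum_nat_add (n + 1)]
  have e1 : ∑ k ∈ Finset.range (n + 1), betaCoeff n k / (p + k) ^ (m + 1) =
      ∑ k ∈ Finset.range (n + 1),
        (-1 : ℂ) ^ k * (Nat.choose n k : ℂ) * (Hc n - Hc (n - k)) / (p + k) ^ (m + 1) := by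
    refine Finset.sum_congr rfl fun k hk => ?_
    rw [betaCoeff, if_pos (by simpa [Nat.lt_succ_iff] using hk)]
  rw [e1, sub_add_cancel_left, ← tsum_neg]
  refine tsum_congr fun k => ?_
  rw [show k + (n + 1) = n + (k + 1) by omega, betaCoeff_add]
  push_cast
  rw [neg_div, neg_neg, div_div, ← add_assoc p]
  ring
end

section
/- Let p ∈ ℂ be not a nonpositive integer and let m ≥ 0 be an integer. Then ∑_{k=1}^∞ 1/(k·(p+k)^(m+1)) = γ/p^(m+1) + (1/p^(m+1))·∑_{j=0}^m ((-1)^j·p^j/j!)·ψ^{(j)}(p+1), where ψ^{(j)} denotes the j-th derivative of the digamma function (ψ^{(0)} = ψ). -/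
/-!
The starting point is Weierstrass' product
`∏ (1 + s/(k+1)) exp(-s/(k+1)) = exp(-γ s) / Γ(s+1)`, obtained by comparing its partial products
with Euler's sequence `Complex.GammaSeq (s + 1) n` and using `H_n - log n → γ`
(`weierstrass_tprod`).  The product converges locally uniformly, so its logarithmic derivative may
be taken termwise, which gives `∑ (1/(k+1) - 1/(z+k)) = γ + ψ(z)` (`tsum_psiTerm_zero`).

That series converges locally uniformly off the poles, and its terms are holomorphic there, so it
can be differentiated termwise any number of times (`tendsto_psiTerm`), giving series for all
`ψ^{(j)}(p+1)`.  Inserting these in the right-hand side reduces the theorem to the finite geometric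
identity `p^(m+1) / (a q^(m+1)) = 1/a - ∑_{j ≤ m} p^j / q^(j+1)` for `q = p + a`, applied with
`a = k + 1`.
-/

/-- The complex digamma function `ψ(z) = Γ'(z)/Γ(z)`. -/
noncomputable def cpsi (z : ℂ) : ℂ := deriv Complex.Gamma z / Complex.Gamma z

open Filter Topology

/-- The complement of the poles of `ψ`. -/
def psiDomain : Set ℂ := {z | ∀ k : ℕ, z ≠ -k}

lemma isOpen_psiDomain : IsOpen psiDomain := by
  have : psiDomain = (fun z => (Complex.Gamma z)⁻¹) ⁻¹' {0}ᶜ := by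
    ext z
    simp [psiDomain, Complex.Gamma_eq_zero_iff]
  rw [this]
  exact isOpen_compl_singleton.preimage Complex.differentiable_one_div_Gamma.continuous

lemma add_natCast_ne_zero_s13 {z : ℂ} (hz : z ∈ psiDomain) (k : ℕ) : z + k ≠ 0 :=
  fun h => hz k (eq_neg_of_add_eq_zero_left h)

/-- The `k`-th term of the series for the `j`-th derivative of `ψ + γ`. -/
noncomputable def psiTerm (j k : ℕ) (z : ℂ) : ℂ :=
  (if j = 0 then 1 / ((k : ℂ) + 1) else 0) - (-1) ^ j * j.factorial / (z + k) ^ (j + 1)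

lemma hasDerivAt_psiTerm (j k : ℕ) {z : ℂ} (hz : z ∈ psiDomain) :
    HasDerivAt (psiTerm j k) (psiTerm (j + 1) k z) z := by
  have h0 := add_natCast_ne_zero_s13 hz k
  have h1 : HasDerivAt (fun z : ℂ => (z + k) ^ (j + 1)) ((j + 1 : ℕ) * (z + k) ^ j * 1) z := by
    exact ((hasDerivAt_id z).add_const (k : ℂ)).pow (j + 1)
  have h2 := ((hasDerivAt_const z ((-1 : ℂ) ^ j * j.factorial)).fun_div h1
    (pow_ne_zero _ h0)).const_sub (if j = 0 then 1 / ((k : ℂ) + 1) else 0)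
  refine h2.congr_deriv ?_
  simp only [psiTerm, Nat.factorial_succ, Nat.succ_ne_zero, if_false]
  push_cast
  field_simp
  ring

lemma summable_const_div_sq (C : ℝ) : Summable fun k : ℕ => C / ((k : ℝ) + 1) ^ 2 := by
  have := (summable_nat_add_iff 1).2 (Real.summable_one_div_nat_pow.2 (one_lt_two))
  refine (this.mul_left C).congr fun k => ?_
  push_cast
  ring

lemma norm_psiTerm_zero_le {R : ℝ} {k : ℕ} (hk : 2 * (R + 1) ≤ (k : ℝ) + 1) {z : ℂ}
    (hz : ‖z‖ ≤ R) : ‖psiTerm 0 k z‖ ≤ 2 * (R + 1) / ((k : ℝ) + 1) ^ 2 := by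
  have hR : 0 ≤ R := (norm_nonneg z).trans hz
  have hk0 : (0 : ℝ) < (k : ℝ) + 1 := by positivity
  have hlow : ((k : ℝ) + 1) / 2 ≤ ‖z + k‖ := by
    have h := norm_sub_le (z + k) z
    rw [add_sub_cancel_left, Complex.norm_natCast] at h
    linarith
  have hne : z + k ≠ 0 := norm_pos_iff.1 (by linarith)
  have hk1 : (k : ℂ) + 1 ≠ 0 := Nat.cast_add_one_ne_zero k
  have e : psiTerm 0 k z = (z - 1) / (((k : ℂ) + 1) * (z + k)) := by
    simp only [psiTerm, if_true, pow_zero, Nat.factorial_zero, zero_add, pow_one]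
    field_simp
    push_cast
    ring
  have hn : ‖(k : ℂ) + 1‖ = (k : ℝ) + 1 := by
    exact_mod_cast Complex.norm_natCast (k + 1)
  have hz1 : ‖z - 1‖ ≤ R + 1 := (norm_sub_le _ _).trans (by simpa using hz)
  rw [e, norm_div, norm_mul, hn]
  calc ‖z - 1‖ / (((k : ℝ) + 1) * ‖z + k‖)
      ≤ (R + 1) / (((k : ℝ) + 1) * (((k : ℝ) + 1) / 2)) := by gcongr
    _ = 2 * (R + 1) / ((k : ℝ) + 1) ^ 2 := by field_simp

lemma eventually_le_natCast_add_one (C : ℝ) : ∀ᶠ k : ℕ in cofinite, C ≤ (k : ℝ) + 1 := by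
  rw [Nat.cofinite_eq_atTop]
  filter_upwards [eventually_ge_atTop ⌈C⌉₊] with k hk
  have := Nat.ceil_le.1 hk
  linarith

lemma summable_psiTerm_zero (z : ℂ) : Summable fun k => psiTerm 0 k z := by
  refine (summable_const_div_sq (2 * (‖z‖ + 1))).of_norm_bounded_eventually ?_
  filter_upwards [eventually_le_natCast_add_one (2 * (‖z‖ + 1))] with k hk
  exact norm_psiTerm_zero_le hk le_rfl

/-- The `k`-th factor `(1 + s/(k+1)) exp(-s/(k+1))` of Weierstrass' product. -/
noncomputable def weierstrassFactor (k : ℕ) (s : ℂ) : ℂ :=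
  (1 + s / (k + 1)) * Complex.exp (-(s / (k + 1)))

lemma differentiable_weierstrassFactor (k : ℕ) : Differentiable ℂ (weierstrassFactor k) := by
  unfold weierstrassFactor
  fun_prop

lemma norm_weierstrassFactor_sub_one_le {R : ℝ} {k : ℕ} (hk : R ≤ (k : ℝ) + 1) {s : ℂ}
    (hs : ‖s‖ ≤ R) : ‖weierstrassFactor k s - 1‖ ≤ 3 * R ^ 2 / ((k : ℝ) + 1) ^ 2 := by
  have hk0 : (0 : ℝ) < (k : ℝ) + 1 := by positivity
  have hn : ‖(k : ℂ) + 1‖ = (k : ℝ) + 1 := by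
    exact_mod_cast Complex.norm_natCast (k + 1)
  have hwR : ‖s / (k + 1)‖ ≤ R / ((k : ℝ) + 1) := by
    rw [norm_div, hn]; gcongr
  have hw1 : ‖s / (k + 1)‖ ≤ 1 := hwR.trans ((div_le_one hk0).2 hk)
  unfold weierstrassFactor
  generalize s / ((k : ℂ) + 1) = w at *
  have h2 := Complex.norm_exp_sub_one_sub_id_le (x := -w) (by simpa using hw1)
  rw [norm_neg] at h2
  have e : (1 + w) * Complex.exp (-w) - 1
      = (1 + w) * (Complex.exp (-w) - 1 - -w) - w ^ 2 := by ring
  have h1w : ‖1 + w‖ ≤ 2 := (norm_add_le _ _).trans (by rw [norm_one]; linarith)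
  calc ‖(1 + w) * Complex.exp (-w) - 1‖
      ≤ ‖1 + w‖ * ‖Complex.exp (-w) - 1 - -w‖ + ‖w‖ ^ 2 := by
        rw [e]
        refine (norm_sub_le _ _).trans ?_
        rw [norm_mul, norm_pow]
    _ ≤ 2 * ‖w‖ ^ 2 + ‖w‖ ^ 2 := by gcongr
    _ = 3 * ‖w‖ ^ 2 := by ring
    _ ≤ 3 * (R / ((k : ℝ) + 1)) ^ 2 := by gcongr
    _ = 3 * R ^ 2 / ((k : ℝ) + 1) ^ 2 := by rw [div_pow, mul_div_assoc]

lemma multipliable_weierstrassFactor (R : ℝ) :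
    MultipliableLocallyUniformlyOn weierstrassFactor (Metric.ball 0 R) := by
  have h := Summable.multipliableLocallyUniformlyOn_one_add
    (f := fun k s => weierstrassFactor k s - 1)
    (Metric.isOpen_ball (x := (0 : ℂ)) (ε := R)) (summable_const_div_sq (3 * R ^ 2)) (by
      filter_upwards [eventually_le_natCast_add_one R] with k hk s hs
      exact norm_weierstrassFactor_sub_one_le hk (mem_ball_zero_iff.1 hs).le)
    (fun k => ((differentiable_weierstrassFactor k).sub_const 1).continuous.continuousOn)
  simpa using h

/-- Comparison of the partial products of Weierstrass' product with Euler's sequence for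
`Γ(s+1)`. -/
lemma prod_weierstrassFactor_mul_GammaSeq {s : ℂ} (hs : s + 1 ∈ psiDomain) {n : ℕ} (hn : n ≠ 0) :
    (∏ k ∈ Finset.range n, weierstrassFactor k s) * Complex.GammaSeq (s + 1) n =
      Complex.exp (-(Real.eulerMascheroniSeq' n : ℂ) * s) * (n / (n + (s + 1))) := by
  have hn' : (n : ℂ) ≠ 0 := Nat.cast_ne_zero.2 hn
  have hfac : ∏ k ∈ Finset.range n, weierstrassFactor k s =
      (∏ k ∈ Finset.range n, (s + 1 + k)) / n.factorial *
        Complex.exp (-((harmonic n : ℚ) : ℂ) * s) := by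
    unfold weierstrassFactor
    rw [Finset.prod_mul_distrib, ← Complex.exp_sum, ← Finset.prod_range_add_one_eq_factorial]
    push_cast
    rw [← Finset.prod_div_distrib]
    congr 1
    · refine Finset.prod_congr rfl fun k _ => ?_
      have := Nat.cast_add_one_ne_zero (R := ℂ) k
      field_simp
      ring
    · rw [harmonic]
      push_cast
      rw [← Finset.sum_neg_distrib, Finset.sum_mul]
      congr 1
      refine Finset.sum_congr rfl fun k _ => ?_
      ring
  have hseq : Complex.exp (-(Real.eulerMascheroniSeq' n : ℂ) * s) =
      Complex.exp (-((harmonic n : ℚ) : ℂ) * s) * (n : ℂ) ^ s := by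
    rw [Complex.cpow_def_of_ne_zero hn', ← Complex.exp_add, Real.eulerMascheroniSeq', if_neg hn]
    push_cast
    congr 1
    ring
  have hP : ∏ k ∈ Finset.range n, (s + 1 + k) ≠ 0 :=
    Finset.prod_ne_zero_iff.2 fun k _ => add_natCast_ne_zero_s13 hs k
  have hl := add_natCast_ne_zero_s13 hs n
  have hl' : (n : ℂ) + (s + 1) ≠ 0 := by rwa [add_comm]
  have hf : (n.factorial : ℂ) ≠ 0 := Nat.cast_ne_zero.2 n.factorial_ne_zero
  rw [hfac, hseq, Complex.GammaSeq, Finset.prod_range_succ, Complex.cpow_add _ _ hn',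
    Complex.cpow_one, add_comm (n : ℂ) (s + 1)]
  field_simp

/-- Weierstrass' product for `Γ`, in the form `∏ₖ … = exp(-γ s) / Γ(s+1)`. -/
lemma weierstrass_tprod {s : ℂ} (hs : s + 1 ∈ psiDomain) :
    ∏' k, weierstrassFactor k s =
      Complex.exp (-(Real.eulerMascheroniConstant : ℂ) * s) * (Complex.Gamma (s + 1))⁻¹ := by
  have hG : Complex.Gamma (s + 1) ≠ 0 := Complex.Gamma_ne_zero hs
  have hprod : Tendsto (fun n => ∏ k ∈ Finset.range n, weierstrassFactor k s) atTop
      (𝓝 (∏' k, weierstrassFactor k s)) :=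
    ((multipliable_weierstrassFactor (‖s‖ + 1)).hasProdLocallyUniformlyOn.hasProd
      (by simp)).tendsto_prod_nat
  have hleft := hprod.mul (Complex.GammaSeq_tendsto_Gamma (s + 1))
  have hγ : Tendsto (fun n => (Real.eulerMascheroniSeq' n : ℂ)) atTop
      (𝓝 (Real.eulerMascheroniConstant : ℂ)) :=
    (Complex.continuous_ofReal.tendsto _).comp Real.tendsto_eulerMascheroniSeq'
  have hright := ((Complex.continuous_exp.tendsto _).comp (hγ.neg.mul_const s)).mul
    (tendsto_natCast_div_add_atTop (s + 1))
  have := tendsto_nhds_unique hleft (hright.congr' (by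
    filter_upwards [eventually_ne_atTop 0] with n hn
    exact (prod_weierstrassFactor_mul_GammaSeq hs hn).symm))
  rw [mul_one] at this
  rw [← this, mul_inv_cancel_right₀ hG]

lemma logDeriv_weierstrassFactor {s : ℂ} (hs : s + 1 ∈ psiDomain) (k : ℕ) :
    weierstrassFactor k s ≠ 0 ∧
      logDeriv (weierstrassFactor k) s = -psiTerm 0 k (s + 1) := by
  have h0 := add_natCast_ne_zero_s13 hs k
  have hk := Nat.cast_add_one_ne_zero (R := ℂ) k
  have h1 : 1 + s / ((k : ℂ) + 1) ≠ 0 := by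
    have : 1 + s / ((k : ℂ) + 1) = (s + 1 + k) / (k + 1) := by field_simp; ring
    rw [this]
    exact div_ne_zero h0 hk
  refine ⟨mul_ne_zero h1 (Complex.exp_ne_zero _), ?_⟩
  have d1 : HasDerivAt (fun s : ℂ => s / ((k : ℂ) + 1)) (1 / ((k : ℂ) + 1)) s :=
    (hasDerivAt_id s).div_const _
  have d := (d1.const_add 1).mul d1.neg.cexp
  have e : deriv (weierstrassFactor k) s = _ := d.deriv
  have hx := Complex.exp_ne_zero (-(s / ((k : ℂ) + 1)))
  rw [logDeriv_apply, e, weierstrassFactor]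
  simp only [psiTerm, if_true, pow_zero, Nat.factorial_zero, zero_add, pow_one, Nat.cast_one,
    mul_one]
  have h3 : (k : ℂ) + 1 + s ≠ 0 := by
    convert h0 using 1
    ring
  have h4 : 1 + s / ((k : ℂ) + 1) = (k + 1 + s) / (k + 1) := by field_simp
  rw [show s + 1 + (k : ℂ) = k + 1 + s by ring]
  simp only [Pi.neg_apply]
  rw [h4]
  field_simp
  ring

/-- The classical series `∑ (1/(k+1) - 1/(z+k)) = γ + ψ(z)`. -/
lemma tsum_psiTerm_zero {z : ℂ} (hz : z ∈ psiDomain) :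
    ∑' k, psiTerm 0 k z = (Real.eulerMascheroniConstant : ℂ) + cpsi z := by
  obtain ⟨s, rfl⟩ : ∃ s, z = s + 1 := ⟨z - 1, by ring⟩
  have hG : Complex.Gamma (s + 1) ≠ 0 := Complex.Gamma_ne_zero hz
  have key := logDeriv_tprod_eq_tsum (f := weierstrassFactor) (Metric.isOpen_ball)
    (show s ∈ Metric.ball (0 : ℂ) (‖s‖ + 1) by simp)
    (fun k => (logDeriv_weierstrassFactor hz k).1)
    (fun k => (differentiable_weierstrassFactor k).differentiableOn)
    ((summable_psiTerm_zero (s + 1)).neg.congr fun k => (logDeriv_weierstrassFactor hz k).2.symm)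
    (multipliable_weierstrassFactor _)
    (by
      rw [weierstrass_tprod hz]
      exact mul_ne_zero (Complex.exp_ne_zero _) (inv_ne_zero hG))
  simp_rw [(logDeriv_weierstrassFactor hz _).2, tsum_neg] at key
  have hev : (fun s => ∏' k, weierstrassFactor k s) =ᶠ[𝓝 s] fun s =>
      Complex.exp (-(Real.eulerMascheroniConstant : ℂ) * s) * (Complex.Gamma (s + 1))⁻¹ := by
    filter_upwards [(isOpen_psiDomain.preimage (continuous_add_const (1 : ℂ))).mem_nhds hz]
      with t ht
    exact weierstrass_tprod ht
  have dG := (Complex.differentiableAt_Gamma _ hz).hasDerivAt.comp_add_const s 1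
  have dE := ((hasDerivAt_id s).const_mul (-(Real.eulerMascheroniConstant : ℂ))).cexp
  have d : HasDerivAt (fun s =>
      Complex.exp (-(Real.eulerMascheroniConstant : ℂ) * s) * (Complex.Gamma (s + 1))⁻¹) _ s :=
    dE.mul (dG.fun_inv hG)
  rw [(logDeriv_congr_nhds hev).eq_of_nhds, logDeriv_apply, d.deriv] at key
  have hx := Complex.exp_ne_zero (-(Real.eulerMascheroniConstant : ℂ) * s)
  rw [← neg_eq_iff_eq_neg] at key
  rw [← key, cpsi]
  simp only [id]
  field_simp
  ring

/-- The series for `γ + ψ` may be differentiated termwise any number of times. -/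
lemma tendsto_psiTerm (j : ℕ) :
    TendstoLocallyUniformlyOn (fun (S : Finset ℕ) z => ∑ k ∈ S, psiTerm j k z)
      (fun z => (if j = 0 then (Real.eulerMascheroniConstant : ℂ) else 0) + iteratedDeriv j cpsi z)
      atTop psiDomain := by
  induction j with
  | zero =>
    have h : TendstoLocallyUniformlyOn (fun (S : Finset ℕ) z => ∑ k ∈ S, psiTerm 0 k z)
        (fun z => ∑' k, psiTerm 0 k z) atTop psiDomain := by
      rw [tendstoLocallyUniformlyOn_iff_forall_isCompact isOpen_psiDomain]
      intro K _ hK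
      obtain ⟨R, hR⟩ := hK.isBounded.exists_norm_le
      refine tendstoUniformlyOn_tsum_of_cofinite_eventually
        (summable_const_div_sq (2 * (R + 1))) ?_
      filter_upwards [eventually_le_natCast_add_one (2 * (R + 1))] with k hk z hz
      exact norm_psiTerm_zero_le hk (hR z hz)
    refine h.congr_right fun z hz => ?_
    simpa using tsum_psiTerm_zero hz
  | succ j ih =>
    have hd : ∀ (S : Finset ℕ) {z : ℂ}, z ∈ psiDomain →
        HasDerivAt (fun z => ∑ k ∈ S, psiTerm j k z) (∑ k ∈ S, psiTerm (j + 1) k z) z :=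
      fun S z hz => HasDerivAt.fun_sum fun k _ => hasDerivAt_psiTerm j k hz
    have h := ih.deriv (Eventually.of_forall fun S z hz =>
      (hd S hz).differentiableAt.differentiableWithinAt) isOpen_psiDomain
    refine (h.congr fun S z hz => (hd S hz).deriv).congr_right fun z _ => ?_
    simp [iteratedDeriv_succ]

lemma hasSum_psiTerm (j : ℕ) {z : ℂ} (hz : z ∈ psiDomain) :
    HasSum (fun k => psiTerm j k z)
      ((if j = 0 then (Real.eulerMascheroniConstant : ℂ) else 0) + iteratedDeriv j cpsi z) :=
  (tendsto_psiTerm j).tendsto_at hz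

/-- The finite geometric identity behind the theorem. -/
lemma sub_geom_eq {p a : ℂ} (ha : a ≠ 0) (hq : p + a ≠ 0) (m : ℕ) :
    1 / a - ∑ j ∈ Finset.range (m + 1), p ^ j / (p + a) ^ (j + 1) =
      p ^ (m + 1) / (a * (p + a) ^ (m + 1)) := by
  induction m with
  | zero => simp; field_simp; ring
  | succ m ih =>
    rw [Finset.sum_range_succ, ← sub_sub, ih]
    field_simp
    ring

/-- For `p ∈ ℂ` not a nonpositive integer and an integer `m ≥ 0`,
`∑_{k=1}^∞ 1/(k·(p+k)^(m+1))
  = γ/p^(m+1) + (1/p^(m+1))·∑_{j=0}^m ((-1)^j·p^j/j!)·ψ^{(j)}(p+1)`. -/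
theorem sum_inv_k_pk_eq (p : ℂ) (hp : ∀ j : ℕ, p ≠ -j) (m : ℕ) :
    (∑' k : ℕ, 1 / ((k + 1 : ℂ) * (p + (k + 1)) ^ (m + 1))) =
      (Real.eulerMascheroniConstant : ℂ) / p ^ (m + 1) +
      1 / p ^ (m + 1) *
        ∑ j ∈ Finset.range (m + 1),
          (-1 : ℂ) ^ j * p ^ j / Nat.factorial j * iteratedDeriv j cpsi (p + 1) := by
  have hp0 : p ≠ 0 := by simpa using hp 0
  have hz : p + 1 ∈ psiDomain := fun k h => hp (k + 1) (by
    push_cast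
    linear_combination h)
  have hsum := (hasSum_sum fun j (_ : j ∈ Finset.range (m + 1)) =>
    (hasSum_psiTerm j hz).mul_left ((-1 : ℂ) ^ j * p ^ j / j.factorial)).mul_left (1 / p ^ (m + 1))
  have hterm : ∀ k : ℕ, 1 / p ^ (m + 1) * ∑ j ∈ Finset.range (m + 1),
      (-1 : ℂ) ^ j * p ^ j / j.factorial * psiTerm j k (p + 1) =
      1 / ((k + 1 : ℂ) * (p + (k + 1)) ^ (m + 1)) := by
    intro k
    have hk := Nat.cast_add_one_ne_zero (R := ℂ) k
    have hq : p + ((k : ℂ) + 1) ≠ 0 := by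
      convert add_natCast_ne_zero_s13 hz k using 1
      ring
    have hj : ∀ j, (-1 : ℂ) ^ j * p ^ j / j.factorial * psiTerm j k (p + 1) =
        (if j = 0 then 1 / ((k : ℂ) + 1) else 0) - p ^ j / (p + (k + 1)) ^ (j + 1) := by
      intro j
      have hf : (j.factorial : ℂ) ≠ 0 := Nat.cast_ne_zero.2 j.factorial_ne_zero
      have hs : (-1 : ℂ) ^ j * (-1) ^ j = 1 := by rw [← mul_pow]; simp
      rw [psiTerm, show p + 1 + (k : ℂ) = p + (k + 1) by ring, mul_sub]
      congr 1
      · split_ifs with h <;> simp [h]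
      · field_simp
        linear_combination hs
    simp_rw [hj]
    rw [Finset.sum_sub_distrib, Finset.sum_ite_eq' (Finset.range (m + 1)) 0,
      if_pos (Finset.mem_range.2 m.succ_pos), sub_geom_eq hk hq]
    field_simp
  simp_rw [hterm] at hsum
  rw [hsum.tsum_eq]
  have hγ : ∑ j ∈ Finset.range (m + 1), (-1 : ℂ) ^ j * p ^ j / j.factorial *
      (if j = 0 then (Real.eulerMascheroniConstant : ℂ) else 0) =
      Real.eulerMascheroniConstant := by
    simp_rw [mul_ite, mul_zero]
    rw [Finset.sum_ite_eq' (Finset.range (m + 1)) 0, if_pos (Finset.mem_range.2 m.succ_pos)]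
    simp
  simp_rw [mul_add, Finset.sum_add_distrib]
  rw [hγ]
  ring
end
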